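/- Let (R, m) be an analytically unramified Noetherian local ring with conductor ideal 𝔠, and suppose R satisfies Serre's condition (S2), i.e. depth(R_p) ≥ min{2, height(p)} for every prime ideal p. If the i-fold tensor power 𝔠^{⊗i} = 𝔠 ⊗_R ⋯ ⊗_R 𝔠 is a torsion-free R-module for some i > 1 (no nonzero element of 𝔠^{⊗i} is annihilated by a nonzerodivisor of R), then 𝔠 is a free R-module and R is normal. -/

import Mathlib

open CategoryTheory IsLocalRing

set_option synthInstance.maxHeartbeats 1000000
set_option maxHeartbeats 1000000

noncomputable section

/-- The integral closure `R̄` of `R` in its total ring of fractions, viewed as a type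
(with its canonical `R`-algebra and `R`-module structures). -/
abbrev IntClosure (R : Type) [CommRing R] : Type :=
  ↥(integralClosure R (FractionRing R))

/-- The quotient `R`-module `R̄/R`. -/
abbrev IntClosureQuot (R : Type) [CommRing R] : Type :=
  IntClosure R ⧸ LinearMap.range (Algebra.linearMap R (IntClosure R))

/-- The conductor ideal `𝔠 = Ann_R(R̄/R) = {r : R | r • R̄ ⊆ R}`. -/
def conductorIdeal (R : Type) [CommRing R] : Ideal R :=
  Module.annihilator R (IntClosureQuot R)

/-- A local ring `R` is analytically unramified if its `m`-adic completion is reduced. -/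
def AnalyticallyUnramified (R : Type) [CommRing R] [IsLocalRing R] : Prop :=
  IsReduced (AdicCompletion (maximalIdeal R) R)

/-- `R` is normal: it is reduced and equal to its integral closure `R̄` in its total
ring of fractions. -/
def IsNormalRing (R : Type) [CommRing R] : Prop :=
  IsReduced R ∧ integralClosure R (FractionRing R) = ⊥

/-- `Ext^i_R(M, N)` as a type. -/
abbrev ExtMod (R : Type) [CommRing R] (M : Type) [AddCommGroup M] [Module R M]
    (N : Type) [AddCommGroup N] [Module R N] (i : ℕ) : Type :=
  ↥(((Ext R (ModuleCat.{0} R) i).obj (Opposite.op (ModuleCat.of R M))).obj (ModuleCat.of R N))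

/-- `M` has finite projective dimension over `R`:
`Ext^i_R(M, -)` vanishes for all `i` bigger than some `n`. -/
def HasFiniteProjDim (R : Type) [CommRing R] (M : Type) [AddCommGroup M] [Module R M] : Prop :=
  ∃ n : ℕ, ∀ (N : ModuleCat.{0} R) (i : ℕ), n < i →
    Subsingleton ↥(((Ext R (ModuleCat.{0} R) i).obj (Opposite.op (ModuleCat.of R M))).obj N)

/-- `M` has finite injective dimension over `R`:
`Ext^i_R(-, M)` vanishes for all `i` bigger than some `n`. -/
def HasFiniteInjDim (R : Type) [CommRing R] (M : Type) [AddCommGroup M] [Module R M] : Prop :=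
  ∃ n : ℕ, ∀ (N : ModuleCat.{0} R) (i : ℕ), n < i →
    Subsingleton ↥(((Ext R (ModuleCat.{0} R) i).obj (Opposite.op N)).obj (ModuleCat.of R M))

/-- The depth of an `R`-module `M` over a local ring `(R, m)`: the least `i` such that
`Ext^i_R(R/m, M) ≠ 0` (`⊤` if there is no such `i`), valued in `WithBot (WithTop ℕ)`
for easy comparison with `ringKrullDim`. -/
def moduleDepth (R : Type) [CommRing R] [IsLocalRing R]
    (M : Type) [AddCommGroup M] [Module R M] : WithBot (WithTop ℕ) :=
  sInf { n : WithBot (WithTop ℕ) |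
    ∃ i : ℕ, n = (i : ℕ) ∧ Nontrivial (ExtMod R (ResidueField R) M i) }

/-- A Noetherian local ring is Gorenstein if it has finite injective dimension
as a module over itself. -/
def IsGorensteinLocal (R : Type) [CommRing R] [IsLocalRing R] : Prop :=
  IsNoetherianRing R ∧ HasFiniteInjDim R R

/-- A Noetherian local ring is Cohen–Macaulay if its depth equals its Krull dimension. -/
def IsCohenMacaulayLocal (R : Type) [CommRing R] [IsLocalRing R] : Prop :=
  IsNoetherianRing R ∧ moduleDepth R R = ringKrullDim R

/-- A ring is Cohen–Macaulay if it is Noetherian and all its localizations at primes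
are Cohen–Macaulay local rings. -/
def IsCohenMacaulayRing (A : Type) [CommRing A] : Prop :=
  IsNoetherianRing A ∧ ∀ (p : Ideal A) [p.IsPrime],
    moduleDepth (Localization.AtPrime p) (Localization.AtPrime p) =
      ringKrullDim (Localization.AtPrime p)

/-- Serre's condition `(S2)`: `depth (R_p) ≥ min {2, height p}` for every prime `p`
(`height p` being the dimension of `R_p`). -/
def SerreS2 (R : Type) [CommRing R] : Prop :=
  ∀ (p : Ideal R) [p.IsPrime],
    min 2 (ringKrullDim (Localization.AtPrime p)) ≤
      moduleDepth (Localization.AtPrime p) (Localization.AtPrime p)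

/-- A Noetherian local ring is regular if its maximal ideal can be generated by
`dim R` elements. -/
def IsRegularLocal (A : Type) [CommRing A] [IsLocalRing A] : Prop :=
  IsNoetherianRing A ∧ ∃ s : Finset A, Ideal.span (s : Set A) = maximalIdeal A ∧
    (s.card : WithBot (WithTop ℕ)) = ringKrullDim A

/-- Serre's condition `(R1)`: `R_p` is regular for every prime `p` of height at most `1`. -/
def SerreR1 (R : Type) [CommRing R] : Prop :=
  ∀ (p : Ideal R) [p.IsPrime], ringKrullDim (Localization.AtPrime p) ≤ 1 →
    IsRegularLocal (Localization.AtPrime p)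

/-- The `i`-th local cohomology `H^i_m(M)` of `M` with support in the maximal ideal,
as a type. -/
abbrev localCohMod (R : Type) [CommRing R] [IsLocalRing R] (i : ℕ)
    (M : Type) [AddCommGroup M] [Module R M] : Type :=
  ↥((localCohomology (maximalIdeal R) i).obj (ModuleCat.of R M))

/-- `x : Fin d → R` is a system of parameters for the local ring `(R, m)`:
`d = dim R`, all `x i` lie in `m`, and the ideal they generate is `m`-primary
(its radical is `m`). -/
def IsSystemOfParameters (R : Type) [CommRing R] [IsLocalRing R] {d : ℕ}
    (x : Fin d → R) : Prop :=
  (d : WithBot (WithTop ℕ)) = ringKrullDim R ∧ (∀ i, x i ∈ maximalIdeal R) ∧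
    (Ideal.span (Set.range x)).radical = maximalIdeal R

/-- `E` is an injective hull of the residue field of the local ring `R`:
`E` is injective and contains a copy of `R/m` as an essential submodule. -/
def IsInjectiveHullOfResidueField (R : Type) [CommRing R] [IsLocalRing R]
    (E : Type) [AddCommGroup E] [Module R E] : Prop :=
  Module.Injective R E ∧ ∃ f : ResidueField R →ₗ[R] E, Function.Injective f ∧
    ∀ N : Submodule R E, N ≠ ⊥ → N ⊓ LinearMap.range f ≠ ⊥

/-!
Let `t` be a nonzerodivisor in an ideal `I` of a local ring. In `I ⊗ I` the elements `x ⊗ y` and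
`y ⊗ x` agree after multiplication by `t`, so if a tensor power `I^{⊗i}` with `i > 1` is
torsion-free, they agree there after tensoring with any further elements of `I`. Over the residue
field this forces `I / 𝔪I` to have dimension at most one, and by Nakayama `I = (x)` with `x` a
nonzerodivisor. For `I = 𝔠`, which is also an ideal of `R̄`, this gives `x R̄ ⊆ 𝔠 = x R`, hence
`R̄ = R`.

The conductor contains a nonzerodivisor because `R̄` is a finite `R`-module. By faithfully flat
descent it is enough to bound the denominators of the elements integral over the completion; being
reduced, the completion may be replaced by its quotients by minimal primes, which are complete local
domains. By Cohen's structure theorem such a domain is finite over a power series ring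
`C⟦x₁, …, xᵣ⟧` with `C` a field or a complete discrete valuation ring of characteristic zero, and it
remains to see that these power series rings are N-2. They are normal, which settles characteristic
zero; in characteristic `p` a finite extension is, after enlarging it, separable over a purely
inseparable one, and the purely inseparable case is Tate's argument, by induction on the number of
variables.

Coefficient rings in residue characteristic `p` are intersections of subrings `D₁ ⊇ D₂ ⊇ ⋯` such
that `Dₙ / 𝔪ⁿ` is a coefficient ring of `A / 𝔪ⁿ`. As the `p`-th powers of the elements of `Dₙ ∩ 𝔪`
lie in `p Dₙ + 𝔪ⁿ⁺¹`, passing from `Dₙ` to `Dₙ₊₁` amounts to finding a coefficient field in a local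
ring of characteristic `p` whose maximal ideal is killed by Frobenius: a maximal subfield containing
the `p`-th powers.
-/

section AdicCompleteness

variable {R : Type*} [CommRing R]

theorem isPrecomplete_pi (I : Ideal R) {ι : Type*} [Finite ι] (M : ι → Type*)
    [∀ i, AddCommGroup (M i)] [∀ i, Module R (M i)] [∀ i, IsPrecomplete I (M i)] :
    IsPrecomplete I (∀ i, M i) := by
  classical
  cases nonempty_fintype ι
  refine AdicCompletion.of_surjective_iff.mp fun x => ?_
  choose m hm using fun i => AdicCompletion.of_surjective I (M i) (AdicCompletion.pi I M x i)
  refine ⟨m, (AdicCompletion.piEquivOfFintype I M).injective ?_⟩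
  simp only [AdicCompletion.piEquivOfFintype_apply]
  exact funext hm

theorem finite_of_finite_quotient_smul_top (I : Ideal R) [IsPrecomplete I R] (M : Type*)
    [AddCommGroup M] [Module R M] [IsHausdorff I M]
    [Module.Finite R (M ⧸ (I • ⊤ : Submodule R M))] : Module.Finite R M := by
  obtain ⟨n, f, hf⟩ := Module.Finite.exists_fin' R (M ⧸ (I • ⊤ : Submodule R M))
  obtain ⟨g, hg⟩ := Module.projective_lifting_property _ f (Submodule.mkQ_surjective (I • ⊤))
  have : IsPrecomplete I (Fin n → R) := isPrecomplete_pi I _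
  exact .of_surjective g (surjective_of_mkQ_comp_surjective (I := I) (hg ▸ hf))

theorem finite_quotient_span_singleton_pow {S : Type*} [CommRing S] [Algebra R S] (y : S)
    [Module.Finite R (S ⧸ Ideal.span {y})] (n : ℕ) :
    Module.Finite R (S ⧸ Ideal.span {y ^ n}) := by
  induction n with
  | zero =>
    have : Subsingleton (S ⧸ Ideal.span {y ^ 0}) := by
      rw [Ideal.Quotient.subsingleton_iff, pow_zero, Ideal.span_singleton_one]
    infer_instance
  | succ n ih =>
    obtain ⟨k, f, hf⟩ := Module.Finite.exists_fin' R (S ⧸ Ideal.span {y})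
    obtain ⟨g, hg⟩ := Module.projective_lifting_property
      (Ideal.Quotient.mkₐ R (Ideal.span {y})).toLinearMap f Ideal.Quotient.mk_surjective
    let mulY : (S ⧸ Ideal.span {y ^ n}) →ₗ[S] S ⧸ Ideal.span {y ^ (n + 1)} :=
      Submodule.mapQ _ _ (LinearMap.mulLeft S y) <| by
        rw [Ideal.span, Submodule.span_le, Set.singleton_subset_iff]
        exact Ideal.mem_span_singleton.mpr (pow_succ' y n).dvd
    refine .of_surjective (((Ideal.Quotient.mkₐ R (Ideal.span {y ^ (n + 1)})).toLinearMap ∘ₗ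
      g).coprod (mulY.restrictScalars R)) fun z => ?_
    obtain ⟨s, rfl⟩ := Ideal.Quotient.mk_surjective z
    obtain ⟨c, hc⟩ := hf (Ideal.Quotient.mk _ s)
    have hgc : Ideal.Quotient.mk (Ideal.span {y}) (g c) = Ideal.Quotient.mk _ s :=
      (DFunLike.congr_fun hg c).trans hc
    obtain ⟨w, hw⟩ := Ideal.mem_span_singleton.mp (Ideal.Quotient.eq.mp hgc.symm)
    refine ⟨(c, Ideal.Quotient.mk _ w), ?_⟩
    change Ideal.Quotient.mk _ (g c) + Ideal.Quotient.mk _ (y * w) = _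
    rw [← map_add, ← hw, add_sub_cancel]

end AdicCompleteness

section PurelyInseparable

universe u

theorem finite_integralClosure_of_injective {R A B : Type*} [CommRing R] [IsNoetherianRing R]
    [CommRing A] [CommRing B] [Algebra R A] [Algebra R B] (f : A →ₐ[R] B)
    (hf : Function.Injective f) [Module.Finite R (integralClosure R B)] :
    Module.Finite R (integralClosure R A) :=
  .of_injective f.mapIntegralClosure.toLinearMap fun _ _ hab =>
    Subtype.ext (hf (congrArg Subtype.val hab))

/-- The purely inseparable part of Nagata's condition N-2: the integral closure of `R` in every
finite purely inseparable extension of its fraction field is a finite `R`-module. -/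
def IsPurelyInseparablyN2 (R : Type u) [CommRing R] : Prop :=
  ∀ (K L : Type u) [Field K] [Field L] [Algebra R K] [IsFractionRing R K] [Algebra R L]
    [Algebra K L] [IsScalarTower R K L] [FiniteDimensional K L] [IsPurelyInseparable K L],
    Module.Finite R (integralClosure R L)

theorem IsPurelyInseparablyN2.of_ringEquiv {R S : Type u} [CommRing R] [CommRing S]
    (hR : IsPurelyInseparablyN2 R) (e : R ≃+* S) : IsPurelyInseparablyN2 S := by
  intro K L _ _ _ _ _ _ _ _ _
  algebraize [e.toRingHom, (algebraMap S K).comp e.toRingHom, (algebraMap S L).comp e.toRingHom]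
  have : IsFractionRing R K := by
    have := IsLocalization.isLocalization_of_base_ringEquiv (nonZeroDivisors S) K e.symm
    rw [MulEquivClass.map_nonZeroDivisors] at this
    convert this
    ext r
    simp
  have : IsScalarTower R K L := .of_algebraMap_eq fun r =>
    IsScalarTower.algebraMap_apply S K L (e r)
  have : Algebra.IsIntegral R S := ⟨fun s => by
    obtain ⟨r, rfl⟩ := e.surjective s
    exact isIntegral_algebraMap⟩
  have hclosure : integralClosure R L = (integralClosure S L).restrictScalars R :=
    Subalgebra.ext fun z => ⟨fun hz => hz.tower_top, fun hz => isIntegral_trans z hz⟩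
  have : Module.Finite R (integralClosure S L) := by
    have := hR K L
    rwa [hclosure] at this
  exact .of_restrictScalars_finite R S _

theorem isPurelyInseparablyN2_of_field (k : Type u) [Field k] : IsPurelyInseparablyN2 k := by
  intro K L _ _ _ _ _ _ _ _ _
  have : Module.Finite k K := .of_surjective (Algebra.linearMap k K)
    (IsFractionRing.surjective_iff_isField.mpr (Field.toIsField k))
  have : Module.Finite k L := Module.Finite.trans K L
  infer_instance

theorem IsPurelyInseparablyN2.finite_of_rank_lt_aleph0 {R S : Type u} [CommRing R] [IsDomain R]
    [IsNoetherianRing R] (hR : IsPurelyInseparablyN2 R) [CommRing S] [IsDomain S] [Algebra R S]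
    [FaithfulSMul R S] (p : ℕ) [ExpChar R p]
    (hpow : ∀ s : S, ∃ n, s ^ p ^ n ∈ (algebraMap R S).range)
    (hrank : Module.rank R S < Cardinal.aleph0) : Module.Finite R S := by
  let K := FractionRing R
  let L := FractionRing S
  have : FaithfulSMul R L := .trans R S L
  let _ : Algebra K L := FractionRing.liftAlgebra R L
  have : IsScalarTower R K L := FractionRing.isScalarTower_liftAlgebra R L
  have hint : Algebra.IsIntegral R S := ⟨fun s => by
    obtain ⟨n, r, hr⟩ := hpow s
    exact .of_pow (pow_pos (expChar_pos R p) n) (hr ▸ isIntegral_algebraMap)⟩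
  have : FiniteDimensional K L := Module.rank_lt_aleph0_iff.mp
    (Algebra.IsAlgebraic.rank_of_isFractionRing R K S L ▸ hrank)
  have : ExpChar K p := expChar_of_injective_algebraMap (IsFractionRing.injective R K) p
  have : IsPurelyInseparable K L := by
    have hS (s : S) : algebraMap S L s ∈ perfectClosure K L := by
      obtain ⟨n, r, hr⟩ := hpow s
      refine (mem_perfectClosure_iff_pow_mem p).mpr ⟨n, algebraMap R K r, ?_⟩
      rw [← map_pow, ← hr, ← IsScalarTower.algebraMap_apply, ← IsScalarTower.algebraMap_apply]
    rw [isPurelyInseparable_iff_perfectClosure_eq_top, eq_top_iff]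
    rintro z -
    obtain ⟨a, b, -, rfl⟩ := IsFractionRing.div_surjective (A := S) z
    exact div_mem (hS a) (hS b)
  have := hR K L
  exact .of_injective ((IsScalarTower.toAlgHom R S L).codRestrict (integralClosure R L)
    fun s => (hint.isIntegral s).algebraMap).toLinearMap fun _ _ hab =>
      IsFractionRing.injective S L (congrArg Subtype.val hab)

theorem linearIndependent_of_forall_dvd {R M ι : Type*} [CommRing R] [AddCommGroup M] [Module R M]
    [Fintype ι] (x : R) [IsHausdorff (Ideal.span {x}) R] (hx : IsSMulRegular M x) {t : ι → M}
    (ht : ∀ c : ι → R, ∑ i, c i • t i = 0 → ∀ i, x ∣ c i) : LinearIndependent R t := by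
  have hpow (n : ℕ) : ∀ c : ι → R, ∑ i, c i • t i = 0 → ∀ i, x ^ n ∣ c i := by
    induction n with
    | zero => simp
    | succ n ih =>
      intro c hc i
      choose d hd using ht c hc
      have hsum : x • ∑ i, d i • t i = x • 0 := by
        simpa only [Finset.smul_sum, smul_smul, ← hd, smul_zero] using hc
      rw [hd, pow_succ']
      exact mul_dvd_mul_left x (ih d (hx hsum) i)
  refine Fintype.linearIndependent_iff.mpr fun c hc i => ?_
  refine IsHausdorff.haus (I := Ideal.span {x}) inferInstance (c i) fun n => ?_
  rw [SModEq.zero, Ideal.span_singleton_pow, smul_eq_mul, Ideal.mul_top, Ideal.mem_span_singleton]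
  exact hpow n c hc i

theorem rank_le_rank_of_surjective {R : Type*} {M N : Type u} [CommRing R] [Nontrivial R]
    [AddCommGroup M] [Module R M] [AddCommGroup N] [Module R N] (x : R)
    [IsHausdorff (Ideal.span {x}) R] (hx : IsSMulRegular M x) [Module (R ⧸ Ideal.span {x}) N]
    [IsScalarTower R (R ⧸ Ideal.span {x}) N] (f : M →ₗ[R] N) (hf : Function.Surjective f) :
    Module.rank (R ⧸ Ideal.span {x}) N ≤ Module.rank R M := by
  rw [Module.rank_def (R ⧸ Ideal.span {x})]
  refine ciSup_le' fun ⟨s, hs⟩ => ?_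
  choose lift hlift using hf
  refine LinearIndependent.cardinal_le_rank (v := fun i : s => lift i) ?_
  refine linearIndependent_iff_finset_linearIndependent.mpr fun t => ?_
  refine linearIndependent_of_forall_dvd x hx fun c hc i => ?_
  have hcN : ∑ i : t, Ideal.Quotient.mk (Ideal.span {x}) (c i) • (i : N) = 0 := by
    simpa [hlift, ← Ideal.Quotient.algebraMap_eq, algebraMap_smul] using congrArg f hc
  rw [← Ideal.mem_span_singleton, ← Ideal.Quotient.eq_zero_iff_mem]
  exact Fintype.linearIndependent_iff.mp (linearIndependent_iff_finset_linearIndependent.mp hs t)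
    _ hcN i

theorem exists_ringHom_algebraMap_eq_pow (R : Type*) {K L : Type*} [CommRing R] [IsDomain R]
    [IsIntegrallyClosed R] [Field K] [Field L] [Algebra R K] [IsFractionRing R K] [Algebra R L]
    [Algebra K L] [IsScalarTower R K L] (p e : ℕ) [ExpChar R p]
    (he : ∀ z : L, z ^ p ^ e ∈ (algebraMap K L).range) :
    ∃ φ : integralClosure R L →+* R, ∀ z, algebraMap R _ (φ z) = z ^ p ^ e := by
  have hinj : Function.Injective (algebraMap R (integralClosure R L)) := by
    have : FaithfulSMul R L := .trans R K L
    exact FaithfulSMul.algebraMap_injective _ _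
  have : ExpChar (integralClosure R L) p :=
    expChar_of_injective_algebraMap hinj p
  have hroot (z : integralClosure R L) : ∃ r, algebraMap R _ r = z ^ p ^ e := by
    obtain ⟨k, hk⟩ := he z
    have hkint : IsIntegral R (algebraMap K L k) := hk ▸ z.2.pow _
    obtain ⟨r, rfl⟩ := IsIntegrallyClosed.isIntegral_iff.mp
      ((isIntegral_algebraMap_iff (algebraMap K L).injective).mp hkint)
    exact ⟨r, Subtype.ext ((IsScalarTower.algebraMap_apply R K L r).trans hk)⟩
  choose φ hφ using hroot
  refine ⟨⟨⟨⟨φ, hinj ?_⟩, fun a b => hinj ?_⟩, hinj ?_, fun a b => hinj ?_⟩, hφ⟩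
  · simp [hφ]
  · simp [hφ, mul_pow]
  · simp [hφ, (expChar_pos R p).ne']
  · simp only [map_add, hφ, add_pow_expChar_pow]

section Tate

variable {R S : Type u} [CommRing R] [CommRing S] [Algebra R S] [FaithfulSMul R S] {q : ℕ}
  {φ : S →+* R}

theorem ringHom_algebraMap_eq_pow (hφ : ∀ z, algebraMap R S (φ z) = z ^ q) (r : R) :
    φ (algebraMap R S r) = r ^ q :=
  FaithfulSMul.algebraMap_injective R S (by rw [hφ, map_pow])

variable [IsDomain S]

theorem isHausdorff_span_singleton_of_algebraMap_eq_pow (hq : q ≠ 0)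
    (hφ : ∀ z, algebraMap R S (φ z) = z ^ q) (x : R) [IsHausdorff (Ideal.span {x}) R] :
    IsHausdorff (Ideal.span {x}) S := by
  refine ⟨fun z hz => ?_⟩
  suffices φ z = 0 by
    rw [← pow_eq_zero_iff hq, ← hφ, this, map_zero]
  refine IsHausdorff.haus (I := Ideal.span {x}) inferInstance (φ z) fun n => ?_
  have hzn := hz n
  rw [SModEq.zero, Ideal.span_singleton_pow, Submodule.ideal_span_singleton_smul,
    Submodule.mem_smul_pointwise_iff_exists] at hzn
  obtain ⟨w, -, rfl⟩ := hzn
  rw [SModEq.zero, Ideal.span_singleton_pow, smul_eq_mul, Ideal.mul_top, Ideal.mem_span_singleton,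
    Algebra.smul_def, map_mul, ringHom_algebraMap_eq_pow hφ]
  exact (dvd_pow_self _ hq).mul_right _

theorem dvd_iff_dvd_of_algebraMap_eq_pow [IsIntegrallyClosed S] (hq : q ≠ 0)
    (hφ : ∀ z, algebraMap R S (φ z) = z ^ q) {x : R} {y : S} (hy : y ^ q = algebraMap R S x)
    (z : S) : y ∣ z ↔ x ∣ φ z := by
  have hφy : φ y = x := FaithfulSMul.algebraMap_injective R S ((hφ y).trans hy)
  refine ⟨fun h => hφy ▸ map_dvd φ h, fun h => ?_⟩
  rw [← IsIntegrallyClosed.pow_dvd_pow_iff hq, hy, ← hφ]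
  exact map_dvd _ h

theorem finite_of_isPurelyInseparablyN2_quotient [IsDomain R] [IsNoetherianRing R]
    [IsIntegrallyClosed S] {x : R} (hx : Prime x) [IsAdicComplete (Ideal.span {x}) R]
    (hN2 : IsPurelyInseparablyN2 (R ⧸ Ideal.span {x})) (p e : ℕ)
    [ExpChar (R ⧸ Ideal.span {x}) p] (hφ : ∀ z, algebraMap R S (φ z) = z ^ p ^ e) {y : S}
    (hy : y ^ p ^ e = algebraMap R S x) (hrank : Module.rank R S < Cardinal.aleph0) :
    Module.Finite R S := by
  have hq : p ^ e ≠ 0 := (pow_pos (expChar_pos (R ⧸ Ideal.span {x}) p) e).ne'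
  have hdvd := dvd_iff_dvd_of_algebraMap_eq_pow hq hφ hy
  have hcomap : Ideal.span {x} = (Ideal.span {y}).comap (algebraMap R S) := by
    ext r
    rw [Ideal.mem_comap, Ideal.mem_span_singleton, Ideal.mem_span_singleton, hdvd,
      ringHom_algebraMap_eq_pow hφ, hx.dvd_pow_iff_dvd hq]
  have hprime : (Ideal.span {x}).IsPrime := (Ideal.span_singleton_prime hx.ne_zero).mpr hx
  have : (Ideal.span {y}).IsPrime := by
    convert hprime.comap φ
    ext z
    simp only [Ideal.mem_comap, Ideal.mem_span_singleton, hdvd]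
  let _ : Algebra (R ⧸ Ideal.span {x}) (S ⧸ Ideal.span {y}) :=
    Ideal.Quotient.algebraQuotientOfLEComap hcomap.le
  have : IsScalarTower R (R ⧸ Ideal.span {x}) (S ⧸ Ideal.span {y}) :=
    .of_algebraMap_eq fun _ => rfl
  have : FaithfulSMul (R ⧸ Ideal.span {x}) (S ⧸ Ideal.span {y}) :=
    (faithfulSMul_iff_algebraMap_injective _ _).mpr
      (Ideal.quotientMap_injective' hcomap.ge)
  have : Module.Finite (R ⧸ Ideal.span {x}) (S ⧸ Ideal.span {y}) := by
    refine hN2.finite_of_rank_lt_aleph0 p (fun s => ?_) ((rank_le_rank_of_surjective x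
      (smul_right_injective S hx.ne_zero) (Ideal.Quotient.mkₐ R (Ideal.span {y})).toLinearMap
      Ideal.Quotient.mk_surjective).trans_lt hrank)
    obtain ⟨z, rfl⟩ := Ideal.Quotient.mk_surjective s
    exact ⟨e, Ideal.Quotient.mk _ (φ z), congrArg (Ideal.Quotient.mk _) (hφ z)⟩
  have : Module.Finite R (S ⧸ Ideal.span {y}) := .trans (R ⧸ Ideal.span {x}) _
  have := finite_quotient_span_singleton_pow (R := R) y (p ^ e)
  have := isHausdorff_span_singleton_of_algebraMap_eq_pow hq hφ x
  have : Module.Finite R (S ⧸ (Ideal.span {x} • ⊤ : Submodule R S)) := by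
    rw [Ideal.smul_top_eq_map, Ideal.map_span, Set.image_singleton, ← hy]
    exact .equiv (Submodule.Quotient.restrictScalarsEquiv R (Ideal.span {y ^ p ^ e})).symm
  exact finite_of_finite_quotient_smul_top (Ideal.span {x}) S

end Tate

theorem finite_integralClosure_of_pow_eq_algebraMap {R K L : Type u} [CommRing R] [IsDomain R]
    [IsNoetherianRing R] [IsIntegrallyClosed R] (p : ℕ) [Fact p.Prime] [CharP R p] {x : R}
    (hx : Prime x) [IsAdicComplete (Ideal.span {x}) R]
    (hN2 : IsPurelyInseparablyN2 (R ⧸ Ideal.span {x})) [Field K] [Field L] [Algebra R K]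
    [IsFractionRing R K] [Algebra R L] [Algebra K L] [IsScalarTower R K L]
    [FiniteDimensional K L] {e : ℕ} (he : ∀ z : L, z ^ p ^ e ∈ (algebraMap K L).range) {y : L}
    (hy : y ^ p ^ e = algebraMap R L x) : Module.Finite R (integralClosure R L) := by
  have : (Ideal.span {x}).IsPrime := (Ideal.span_singleton_prime hx.ne_zero).mpr hx
  have : CharP (R ⧸ Ideal.span {x}) p := by
    rw [CharP.charP_iff_prime_eq_zero Fact.out, ← map_natCast (Ideal.Quotient.mk _),
      CharP.cast_eq_zero, map_zero]
  have : FaithfulSMul R L := .trans R K L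
  have : IsIntegrallyClosed (integralClosure R L) :=
    integralClosure.isIntegrallyClosedOfFiniteExtension K
  have : IsFractionRing (integralClosure R L) L :=
    integralClosure.isFractionRing_of_finite_extension K L
  have hyint : IsIntegral R y :=
    .of_pow (pow_pos (Fact.out : p.Prime).pos e) (hy ▸ isIntegral_algebraMap)
  obtain ⟨φ, hφ⟩ := exists_ringHom_algebraMap_eq_pow R (K := K) p e he
  refine finite_of_isPurelyInseparablyN2_quotient hx hN2 p e hφ (y := ⟨y, hyint⟩)
    (Subtype.ext hy) ?_
  rw [← Algebra.IsAlgebraic.rank_of_isFractionRing R K (integralClosure R L) L]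
  exact Module.rank_lt_aleph0 K L

theorem IsPurelyInseparablyN2.of_quotient_span_singleton {R : Type u} [CommRing R] [IsDomain R]
    [IsNoetherianRing R] [IsIntegrallyClosed R] (p : ℕ) [Fact p.Prime] [CharP R p] {x : R}
    (hx : Prime x) [IsAdicComplete (Ideal.span {x}) R]
    (hN2 : IsPurelyInseparablyN2 (R ⧸ Ideal.span {x})) : IsPurelyInseparablyN2 R := by
  intro K L _ _ _ _ _ _ _ _ _
  have : CharP K p := charP_of_injective_algebraMap (IsFractionRing.injective R K) p
  obtain ⟨e, he⟩ := (IsPurelyInseparable.hasExponent_iff' K L p).mp inferInstance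
  let Ω := AlgebraicClosure L
  have : CharP Ω p := charP_of_injective_algebraMap (algebraMap K Ω).injective p
  obtain ⟨y, hy⟩ := IsAlgClosed.exists_pow_nat_eq (algebraMap R Ω x)
    (pow_pos (Fact.out : p.Prime).pos e)
  let M := IntermediateField.adjoin L {y}
  have : FiniteDimensional L M :=
    IntermediateField.adjoin.finiteDimensional (Algebra.IsIntegral.isIntegral y)
  have : FiniteDimensional K M := .trans K L M
  have : IsScalarTower R K M := .to₁₂₄ R K L M
  have hM : M.toSubfield ≤ (algebraMap K Ω).fieldRange.comap (iterateFrobenius Ω p e) := by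
    rw [IntermediateField.adjoin_toSubfield, Subfield.closure_le]
    rintro _ (⟨l, rfl⟩ | rfl)
    · obtain ⟨k, hk⟩ := he l
      exact ⟨k, by rw [iterateFrobenius_def, ← map_pow, ← hk, ← IsScalarTower.algebraMap_apply]⟩
    · exact ⟨algebraMap R K x, (IsScalarTower.algebraMap_apply R K Ω x).symm.trans hy.symm⟩
  have := finite_integralClosure_of_pow_eq_algebraMap p hx hN2 (K := K) (L := M)
    (fun z => (hM z.2).imp fun k hk => Subtype.ext hk)
    (y := ⟨y, IntermediateField.mem_adjoin_simple_self L y⟩) (Subtype.ext hy)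
  exact finite_integralClosure_of_injective (IsScalarTower.toAlgHom R L M)
    (algebraMap L M).injective

end PurelyInseparable

section PowerSeriesNormal

open PowerSeries

variable {R K : Type*} [CommRing R] [CommRing K] [Algebra R K]

theorem isAlmostIntegral_constantCoeff [IsDomain R] {f : K⟦X⟧} (hf : IsAlmostIntegral R⟦X⟧ f) :
    IsAlmostIntegral R (constantCoeff f) := by
  obtain ⟨d, hd, hdf⟩ := hf
  refine ⟨constantCoeff d.divXPowOrder, mem_nonZeroDivisors_of_ne_zero ?_, fun n => ?_⟩
  · rw [constantCoeff_divXPowOrder]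
    exact coeff_order (nonZeroDivisors.ne_zero hd)
  · obtain ⟨c, hc⟩ := hdf n
    refine ⟨coeff d.order.toNat c, ?_⟩
    rw [← X_pow_order_mul_divXPowOrder (f := d), algebraMap_apply'', Algebra.smul_def,
      algebraMap_apply'', map_mul, map_pow, map_X, mul_assoc] at hc
    have hshift := coeff_X_pow_mul (map (algebraMap R K) d.divXPowOrder * f ^ n) d.order.toNat 0
    rw [zero_add] at hshift
    rw [← coeff_map, hc, hshift, coeff_zero_eq_constantCoeff_apply, map_mul, map_pow,
      Algebra.smul_def, ← coeff_zero_eq_constantCoeff_apply, coeff_map,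
      coeff_zero_eq_constantCoeff_apply]

theorem isAlmostIntegral_of_X_mul {f : K⟦X⟧} (hf : IsAlmostIntegral R⟦X⟧ (X * f)) :
    IsAlmostIntegral R⟦X⟧ f := by
  obtain ⟨d, hd, hdf⟩ := hf
  refine ⟨d, hd, fun n => ?_⟩
  obtain ⟨c, hc⟩ := hdf n
  refine ⟨mk fun j => coeff (j + n) c, ?_⟩
  ext j
  rw [algebraMap_apply''] at hc ⊢
  rw [coeff_map, coeff_mk, ← coeff_map, hc, mul_pow, Algebra.smul_def, mul_left_comm,
    coeff_X_pow_mul, Algebra.smul_def]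

theorem coeff_mem_range_of_isAlmostIntegral [IsDomain R] [IsNoetherianRing R]
    [IsIntegrallyClosed R] [IsFractionRing R K] {f : K⟦X⟧} (hf : IsAlmostIntegral R⟦X⟧ f) (n : ℕ) :
    coeff n f ∈ (algebraMap R K).range := by
  have : IsDomain K := IsFractionRing.isDomain R
  have hconst {f : K⟦X⟧} (hf : IsAlmostIntegral R⟦X⟧ f) :
      constantCoeff f ∈ (algebraMap R K).range :=
    IsIntegrallyClosed.isIntegral_iff.mp (isAlmostIntegral_constantCoeff hf).isIntegral
  induction n generalizing f with
  | zero => exact coeff_zero_eq_constantCoeff_apply f ▸ hconst hf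
  | succ n ih =>
    obtain ⟨r, hr⟩ := hconst hf
    obtain ⟨g, hg⟩ : X ∣ f - algebraMap R⟦X⟧ K⟦X⟧ (C r) := by
      rw [X_dvd_iff, map_sub, algebraMap_apply'', map_C, constantCoeff_C, hr, sub_self]
    have hgint : IsAlmostIntegral R⟦X⟧ g := isAlmostIntegral_of_X_mul <|
      hg ▸ (completeIntegralClosure R⟦X⟧ K⟦X⟧).sub_mem hf (algebraMap_mem _ (C r))
    rw [sub_eq_iff_eq_add'.mp hg, map_add, algebraMap_apply'', map_C, coeff_succ_C, zero_add,
      coeff_succ_X_mul]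
    exact ih hgint

instance isIntegrallyClosed_powerSeries [IsDomain R] [IsNoetherianRing R]
    [IsIntegrallyClosed R] : IsIntegrallyClosed R⟦X⟧ := by
  let K := FractionRing R
  let F := FractionRing K⟦X⟧
  have : FaithfulSMul R⟦X⟧ K⟦X⟧ := (faithfulSMul_iff_algebraMap_injective _ _).mpr
    (map_injective _ (IsFractionRing.injective R K))
  have : FaithfulSMul R⟦X⟧ F := .trans R⟦X⟧ K⟦X⟧ F
  let ψ : FractionRing R⟦X⟧ →ₐ[R⟦X⟧] F := IsFractionRing.liftAlgHom (g := Algebra.ofId _ _)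
    (FaithfulSMul.algebraMap_injective R⟦X⟧ F)
  refine (isIntegrallyClosed_iff (FractionRing R⟦X⟧)).mpr fun {s} hs => ?_
  obtain ⟨f, hf⟩ : ∃ f : K⟦X⟧, algebraMap K⟦X⟧ F f = ψ s :=
    IsIntegrallyClosed.isIntegral_iff.mp (hs.map ψ).tower_top
  have hfint : IsAlmostIntegral R⟦X⟧ f := by
    obtain ⟨d, hd, hds⟩ := hs.isAlmostIntegral
    refine ⟨d, hd, fun n => (hds n).imp fun c hc => IsFractionRing.injective K⟦X⟧ F ?_⟩
    rw [← IsScalarTower.algebraMap_apply, ← ψ.commutes, hc, map_smul, map_pow, ← hf,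
      Algebra.smul_def, Algebra.smul_def, map_mul, map_pow,
      IsScalarTower.algebraMap_apply R⟦X⟧ K⟦X⟧ F]
  choose c hc using coeff_mem_range_of_isAlmostIntegral hfint
  have hcf : algebraMap R⟦X⟧ K⟦X⟧ (mk c) = f := by
    ext n
    rw [algebraMap_apply'', coeff_map, coeff_mk, hc]
  refine ⟨mk c, ψ.toRingHom.injective ?_⟩
  change ψ _ = ψ _
  rw [ψ.commutes, IsScalarTower.algebraMap_apply R⟦X⟧ K⟦X⟧ F, hcf, hf]

end PowerSeriesNormal

section MvPowerSeries

open PowerSeries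

universe u

instance isDomain_mvPowerSeries {σ R : Type*} [CommRing R] [IsDomain R] :
    IsDomain (MvPowerSeries σ R) :=
  NoZeroDivisors.to_isDomain _

instance isIntegrallyClosed_mvPowerSeries {R : Type*} [CommRing R] [IsDomain R]
    [IsNoetherianRing R] [IsIntegrallyClosed R] (n : ℕ) :
    IsIntegrallyClosed (MvPowerSeries (Fin n) R) := by
  induction n with
  | zero => exact .of_equiv (MvPowerSeries.isEmptyEquiv (σ := Fin 0) (R := R)).symm.toRingEquiv
  | succ n ih => exact .of_equiv (MvPowerSeries.finSuccEquiv R n).symm.toRingEquiv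

theorem IsPurelyInseparablyN2.powerSeries {R : Type u} [CommRing R] [IsDomain R]
    [IsNoetherianRing R] [IsIntegrallyClosed R] (p : ℕ) [Fact p.Prime] [CharP R p]
    (hR : IsPurelyInseparablyN2 R) : IsPurelyInseparablyN2 R⟦X⟧ := by
  have : CharP R⟦X⟧ p := charP_of_injective_ringHom (C_injective (R := R)) p
  have hker : RingHom.ker (constantCoeff (R := R)) = Ideal.span {X} := by
    ext f
    rw [RingHom.mem_ker, Ideal.mem_span_singleton, X_dvd_iff]
  let e : R⟦X⟧ ⧸ Ideal.span {(X : R⟦X⟧)} ≃+* R :=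
    (Ideal.quotEquivOfEq hker.symm).trans
      (RingHom.quotientKerEquivOfSurjective constantCoeff_surj)
  exact .of_quotient_span_singleton p X_prime (hR.of_ringEquiv e.symm)

theorem isPurelyInseparablyN2_mvPowerSeries (p : ℕ) [Fact p.Prime] (k : Type u) [Field k]
    [CharP k p] (n : ℕ) : IsPurelyInseparablyN2 (MvPowerSeries (Fin n) k) := by
  induction n with
  | zero =>
    exact (isPurelyInseparablyN2_of_field k).of_ringEquiv
      (MvPowerSeries.isEmptyEquiv (σ := Fin 0) (R := k)).symm.toRingEquiv
  | succ n ih =>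
    have : CharP (MvPowerSeries (Fin n) k) p :=
      charP_of_injective_ringHom (MvPowerSeries.C (σ := Fin n) (R := k)).injective p
    exact (ih.powerSeries p).of_ringEquiv (MvPowerSeries.finSuccEquiv k n).symm.toRingEquiv

end MvPowerSeries

section N2

universe u

/-- The N-2 (Japanese) property of a domain `R`: the integral closure of `R` in every finite
extension of its fraction field is a finite `R`-module. The fields range over the universe
of `R`. -/
def IsN2 (R : Type u) [CommRing R] : Prop :=
  ∀ (K L : Type u) [Field K] [Field L] [Algebra R K] [IsFractionRing R K] [Algebra R L]
    [Algebra K L] [IsScalarTower R K L] [FiniteDimensional K L],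
    Module.Finite R (integralClosure R L)

theorem isN2_of_charZero (R : Type u) [CommRing R] [IsDomain R] [CharZero R]
    [IsNoetherianRing R] [IsIntegrallyClosed R] : IsN2 R := by
  intro K L _ _ _ _ _ _ _ _
  have : CharZero K := charZero_of_injective_algebraMap (IsFractionRing.injective R K)
  exact IsIntegralClosure.finite R K L (integralClosure R L)

theorem isSeparable_of_coeff_minpoly_mem {K Ω : Type*} [Field K] [Field Ω] [Algebra K Ω]
    {E F : IntermediateField K Ω} {x : Ω} (hx : IsSeparable E x)
    (hcoeff : ∀ n, algebraMap E Ω ((minpoly E x).coeff n) ∈ F) : IsSeparable F x := by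
  obtain ⟨g, hg⟩ := (Polynomial.mem_lifts ((minpoly E x).map (algebraMap E Ω))).mp <|
    (Polynomial.lifts_iff_coeff_lifts (f := algebraMap F Ω) _).mpr fun n =>
      ⟨⟨_, hcoeff n⟩, (Polynomial.coeff_map (algebraMap E Ω) n).symm⟩
  have hgsep : g.Separable := by
    rw [← Polynomial.separable_map (algebraMap F Ω), hg]
    exact Polynomial.Separable.map hx
  refine hgsep.of_dvd (minpoly.dvd F _ ?_)
  rw [← Polynomial.eval_map_algebraMap, hg, Polynomial.eval_map_algebraMap, minpoly.aeval]

theorem exists_isPurelyInseparable_forall_isSeparable (K : Type*) {Ω : Type*} [Field K] [Field Ω]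
    [Algebra K Ω] [Algebra.IsAlgebraic K Ω] [PerfectField Ω] {s : Set Ω} (hs : s.Finite) :
    ∃ E : IntermediateField K Ω, FiniteDimensional K E ∧ IsPurelyInseparable K E ∧
      ∀ x ∈ s, IsSeparable E x := by
  let P := perfectClosure K Ω
  let T : Set Ω := ⋃ x ∈ s, algebraMap P Ω '' (minpoly P x).coeffs
  have hT : T.Finite := hs.biUnion fun x _ => (Finset.finite_toSet _).image _
  have hTP : IntermediateField.adjoin K T ≤ P := IntermediateField.adjoin_le_iff.mpr <|
    Set.iUnion₂_subset fun _ _ => Set.image_subset_iff.mpr fun c _ => c.2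
  refine ⟨.adjoin K T, ?_, (le_perfectClosure_iff K Ω _).mp hTP, fun x hx => ?_⟩
  · have := hT.to_subtype
    exact IntermediateField.finiteDimensional_adjoin fun t _ => Algebra.IsIntegral.isIntegral t
  · refine isSeparable_of_coeff_minpoly_mem (Algebra.IsSeparable.isSeparable P x) fun n => ?_
    by_cases h0 : (minpoly P x).coeff n = 0
    · rw [h0, map_zero]
      exact zero_mem _
    · exact IntermediateField.subset_adjoin K T <| Set.mem_biUnion hx
        ⟨_, Polynomial.coeff_mem_coeffs h0, rfl⟩

theorem finite_integralClosure_trans (R K L : Type*) {M : Type*} [CommRing R]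
    [IsDomain R] [IsNoetherianRing R] [Field K] [Field L] [Field M] [Algebra R K]
    [IsFractionRing R K] [Algebra R L] [Algebra K L] [IsScalarTower R K L]
    [FiniteDimensional K L] [Algebra R M] [Algebra L M] [IsScalarTower R L M]
    [FiniteDimensional L M] [Algebra.IsSeparable L M] [Module.Finite R (integralClosure R L)] :
    Module.Finite R (integralClosure R M) := by
  let S := integralClosure R L
  have : IsFractionRing S L := integralClosure.isFractionRing_of_finite_extension K L
  have : IsIntegrallyClosed S := integralClosure.isIntegrallyClosedOfFiniteExtension K
  have : IsNoetherianRing S := isNoetherian_of_tower R inferInstance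
  have : IsScalarTower R S M := .to₁₂₄ R S L M
  have : Module.Finite S (integralClosure S M) := IsIntegralClosure.finite S L M _
  have : IsScalarTower R S (integralClosure S M) :=
    .of_algebraMap_eq fun r => Subtype.ext (IsScalarTower.algebraMap_apply R S M r)
  have : Module.Finite R (integralClosure S M) := .trans S _
  let f : integralClosure R M →ₗ[R] integralClosure S M :=
    { toFun := fun z => ⟨z, z.2.tower_top⟩
      map_add' := fun _ _ => rfl
      map_smul' := fun _ _ => rfl }
  exact .of_injective f fun _ _ h => Subtype.ext (congrArg (algebraMap _ M) h)

theorem IsPurelyInseparablyN2.isN2 {R : Type u} [CommRing R] [IsDomain R] [IsNoetherianRing R]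
    (hR : IsPurelyInseparablyN2 R) : IsN2 R := by
  intro K L _ _ _ _ _ _ _ _
  let Ω := AlgebraicClosure L
  let b := Module.finBasis K L
  have hfin : (Set.range fun i => algebraMap L Ω (b i)).Finite := Set.finite_range _
  have : Algebra.IsAlgebraic K Ω := Algebra.IsAlgebraic.trans K L Ω
  obtain ⟨E, _, _, hsep⟩ := exists_isPurelyInseparable_forall_isSeparable K hfin
  let M := IntermediateField.adjoin E (Set.range fun i => algebraMap L Ω (b i))
  have : Algebra.IsSeparable E M :=
    (IntermediateField.isSeparable_adjoin_iff_isSeparable ..).mpr hsep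
  have : FiniteDimensional E M := by
    have := hfin.to_subtype
    exact IntermediateField.finiteDimensional_adjoin fun t _ => Algebra.IsIntegral.isIntegral t
  have hLM (l : L) : algebraMap L Ω l ∈ M := by
    rw [← b.sum_repr l, map_sum]
    refine sum_mem fun i _ => ?_
    rw [Algebra.smul_def, map_mul, ← IsScalarTower.algebraMap_apply K L Ω,
      IsScalarTower.algebraMap_apply K E Ω]
    exact mul_mem (M.algebraMap_mem _) (IntermediateField.subset_adjoin E _ ⟨i, rfl⟩)
  have : IsScalarTower R K E := .of_algebraMap_eq fun r =>
    Subtype.ext (IsScalarTower.algebraMap_apply R K Ω r)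
  algebraize [(algebraMap E M).comp (algebraMap R E)]
  have : Module.Finite R (integralClosure R E) := hR K E
  have : Module.Finite R (integralClosure R M) := finite_integralClosure_trans R K E
  let f : L →ₐ[R] M :=
    { (algebraMap L Ω).codRestrict M.toSubring hLM with
      commutes' := fun r => Subtype.ext (IsScalarTower.algebraMap_apply R L Ω r).symm }
  exact finite_integralClosure_of_injective f f.toRingHom.injective

end N2

section CoefficientField

variable {D : Type*} [CommRing D] (p : ℕ) [Fact p.Prime] {M : Ideal D}
  {F : Subring D}

theorem isField_of_pow_mem [CharP D p] [M.IsMaximal] (hMp : ∀ x ∈ M, x ^ p = 0)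
    (hF : ∀ x, x ^ p ∈ F) (hFM : ∀ x ∈ F, x ∈ M → x = 0) : IsField F := by
  have hp := Fact.out (p := p.Prime)
  have : Nontrivial D := CharP.nontrivial_of_char_ne_one (v := p) hp.ne_one
  refine ⟨⟨0, 1, zero_ne_one⟩, mul_comm, fun {x} hx => ?_⟩
  have hxM : (x : D) ∉ M := fun h => hx (Subtype.ext (hFM x x.2 h))
  obtain ⟨b, i, hi, hbi⟩ := ‹M.IsMaximal›.exists_inv hxM
  have hinv : b ^ p * (x : D) ^ p = 1 := by
    rw [← mul_pow, ← add_zero ((b * x) ^ p), ← hMp i hi, ← add_pow_char, hbi, one_pow]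
  refine ⟨⟨b ^ p, hF b⟩ * x ^ (p - 1), Subtype.ext ?_⟩
  calc (x : D) * (b ^ p * (x : D) ^ (p - 1)) = b ^ p * (x : D) ^ (p - 1 + 1) := by ring
    _ = 1 := by rw [Nat.sub_add_cancel hp.one_le, hinv]

/- Modulo `M`, the element `a` is a root of `X ^ p - a ^ p`, which is irreducible over `F`, so a
polynomial in `a` lying in `M` is a multiple of `a ^ p - a ^ p = 0`. -/
theorem eq_zero_of_mem_adjoin_singleton [CharP D p] [M.IsMaximal] (hMp : ∀ x ∈ M, x ^ p = 0)
    (hF : ∀ x, x ^ p ∈ F) (hFM : ∀ x ∈ F, x ∈ M → x = 0) {a : D} (ha : ∀ f ∈ F, a - f ∉ M)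
    {x : D} (hx : x ∈ Algebra.adjoin F {a}) (hxM : x ∈ M) : x = 0 := by
  have hp := Fact.out (p := p.Prime)
  let _ : Field F := (isField_of_pow_mem p hMp hF hFM).toField
  let c : F := ⟨a ^ p, hF a⟩
  have hirr : Irreducible (Polynomial.X ^ p - Polynomial.C c) := by
    refine X_pow_sub_C_irreducible_of_prime hp fun b hb => ?_
    have hba : (b : D) ^ p = a ^ p := congrArg Subtype.val hb
    refine ha b b.2 (‹M.IsMaximal›.isPrime.mem_of_pow_mem p ?_)
    rw [sub_pow_char, hba, sub_self]
    exact M.zero_mem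
  have hroot : Polynomial.aeval a (Polynomial.X ^ p - Polynomial.C c) = 0 := by
    rw [map_sub, map_pow, Polynomial.aeval_X, Polynomial.aeval_C]
    exact sub_self _
  rw [Algebra.adjoin_singleton_eq_range_aeval] at hx
  obtain ⟨g, rfl⟩ := hx
  have haeval (h : Polynomial F) :
      Polynomial.aeval (Ideal.Quotient.mk M a) h = Ideal.Quotient.mk M (Polynomial.aeval a h) :=
    Polynomial.aeval_algHom_apply (Ideal.Quotient.mkₐ F M) a h
  have hmin := minpoly.eq_of_irreducible_of_monic hirr (by rw [haeval, hroot, map_zero])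
    (Polynomial.monic_X_pow_sub_C c hp.ne_zero)
  obtain ⟨h, rfl⟩ : Polynomial.X ^ p - Polynomial.C c ∣ g :=
    hmin ▸ minpoly.dvd F _ ((haeval g).trans (Ideal.Quotient.eq_zero_iff_mem.mpr hxM))
  change Polynomial.aeval a ((Polynomial.X ^ p - Polynomial.C c) * h) = 0
  rw [map_mul, hroot, zero_mul]

theorem exists_coefficientField_of_pow_eq_zero [CharP D p] [M.IsMaximal]
    (hMp : ∀ x ∈ M, x ^ p = 0) :
    ∃ F : Subring D, (∀ x ∈ F, x ∈ M → x = 0) ∧ ∀ a, ∃ f ∈ F, a - f ∈ M := by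
  let 𝓢 : Set (Subring D) := {F | (∀ x, x ^ p ∈ F) ∧ ∀ x ∈ F, x ∈ M → x = 0}
  have hfrobenius : (frobenius D p).range ∈ 𝓢 := by
    refine ⟨fun x => ⟨x, rfl⟩, ?_⟩
    rintro _ ⟨x, rfl⟩ hx
    exact hMp x (‹M.IsMaximal›.isPrime.mem_of_pow_mem p hx)
  obtain ⟨F, -, hmax⟩ := zorn_le_nonempty₀ 𝓢 (by
    intro c hc hchain E hE
    refine ⟨sSup c, ⟨fun x => le_sSup hE ((hc hE).1 x), fun x hx hxM => ?_⟩,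
      fun _ => le_sSup⟩
    obtain ⟨s, hs, hxs⟩ := (Subring.mem_sSup_of_directedOn ⟨E, hE⟩ hchain.directedOn).mp hx
    exact (hc hs).2 x hxs hxM) _ hfrobenius
  obtain ⟨hF, hFM⟩ := hmax.prop
  refine ⟨F, hFM, ?_⟩
  by_contra! ⟨a, ha⟩
  have hle : F ≤ (Algebra.adjoin F {a}).toSubring :=
    fun x hx => (Algebra.adjoin F {a}).algebraMap_mem ⟨x, hx⟩
  have hadjoin : (Algebra.adjoin F {a}).toSubring ∈ 𝓢 :=
    ⟨fun x => hle (hF x), fun _ => eq_zero_of_mem_adjoin_singleton p hMp hF hFM ha⟩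
  refine ha a (hmax.le_of_ge hadjoin hle (Algebra.self_mem_adjoin_singleton F a)) ?_
  rw [sub_self]
  exact M.zero_mem

theorem exists_coefficientField_mod_of_pow_mem {J P : Ideal D} [P.IsMaximal] (hJP : J ≤ P)
    (hpJ : (p : D) ∈ J) (hpow : ∀ x ∈ P, x ^ p ∈ J) :
    ∃ F : Subring D, (∀ x ∈ J, x ∈ F) ∧ (∀ x ∈ F, x ∈ P → x ∈ J) ∧ ∀ a, ∃ f ∈ F, a - f ∈ P := by
  let π := Ideal.Quotient.mk J
  have hπ : Function.Surjective π := Ideal.Quotient.mk_surjective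
  have hmem (d : D) : π d ∈ P.map π ↔ d ∈ P := by
    rw [← Ideal.mem_comap, Ideal.comap_map_of_surjective' π hπ, Ideal.mk_ker, sup_eq_left.mpr hJP]
  have : (P.map π).IsMaximal :=
    Ideal.IsMaximal.map_of_surjective_of_ker_le hπ (Ideal.mk_ker.trans_le hJP)
  have : Nontrivial (D ⧸ J) := Ideal.Quotient.nontrivial_iff.mpr
    fun h => ‹P.IsMaximal›.ne_top (top_le_iff.mp (h ▸ hJP))
  have : CharP (D ⧸ J) p := by
    rw [CharP.charP_iff_prime_eq_zero Fact.out, ← map_natCast π, Ideal.Quotient.eq_zero_iff_mem]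
    exact hpJ
  have hMp : ∀ x ∈ P.map π, x ^ p = 0 := hπ.forall.mpr fun d hd => by
    rw [← map_pow, Ideal.Quotient.eq_zero_iff_mem]
    exact hpow d ((hmem d).mp hd)
  obtain ⟨F, hFM, hsurj⟩ := exists_coefficientField_of_pow_eq_zero p hMp
  refine ⟨F.comap π, fun x hx => ?_, fun x hx hxP => ?_, fun a => ?_⟩
  · rw [Subring.mem_comap, Ideal.Quotient.eq_zero_iff_mem.mpr hx]
    exact F.zero_mem
  · exact Ideal.Quotient.eq_zero_iff_mem.mp (hFM _ hx ((hmem x).mpr hxP))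
  · obtain ⟨f, hf, haf⟩ := hsurj (π a)
    obtain ⟨f, rfl⟩ := hπ f
    exact ⟨f, hf, (hmem _).mp (map_sub π a f ▸ haf)⟩

end CoefficientField

section AdicLimit

variable {A : Type*} [CommRing A] {I : Ideal A}

theorem eq_zero_of_forall_mem_pow [IsHausdorff I A] {x : A} (hx : ∀ n, x ∈ I ^ n) : x = 0 :=
  IsHausdorff.haus ‹_› x fun n => by
    rw [SModEq.zero, smul_eq_mul, Ideal.mul_top]
    exact hx n

theorem exists_forall_sub_mem_pow [IsPrecomplete I A] {x : ℕ → A} (n : ℕ)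
    (hx : ∀ j, x j - x (j + 1) ∈ I ^ (n + j)) : ∃ a, ∀ j, x j - a ∈ I ^ (n + j) := by
  have hcauchy : AdicCompletion.IsAdicCauchy I A fun k => x (k - n) := by
    rw [AdicCompletion.isAdicCauchy_iff]
    intro k
    rw [SModEq.sub_mem, smul_eq_mul, Ideal.mul_top]
    rcases lt_or_ge k n with hk | hk
    · rw [Nat.sub_eq_zero_of_le hk, Nat.sub_eq_zero_of_le hk.le, sub_self]
      exact Ideal.zero_mem _
    · have := hx (k - n)
      rwa [Nat.add_sub_cancel' hk, ← Nat.sub_add_comm hk] at this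
  obtain ⟨a, ha⟩ := IsPrecomplete.prec ‹_› hcauchy
  refine ⟨a, fun j => ?_⟩
  have := ha (n + j)
  rwa [SModEq.sub_mem, smul_eq_mul, Ideal.mul_top, Nat.add_sub_cancel_left] at this

theorem exists_forall_mem_sub_mem_pow [IsPrecomplete I A] {D : ℕ → AddSubgroup A}
    (hD : Antitone D) (hpow : ∀ n, ∀ x ∈ I ^ (n + 1), x ∈ D n)
    (hstep : ∀ n, ∀ d ∈ D n, ∃ d' ∈ D (n + 1), d - d' ∈ I ^ (n + 1)) {n : ℕ} {d : A}
    (hd : d ∈ D n) : ∃ c, (∀ k, c ∈ D k) ∧ d - c ∈ I ^ (n + 1) := by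
  have hnext (k : ℕ) (d : D k) : ∃ d' : D (k + 1), (d : A) - d' ∈ I ^ (k + 1) := by
    obtain ⟨d', hd', hdd'⟩ := hstep k d d.2
    exact ⟨⟨d', hd'⟩, hdd'⟩
  choose next hnext using hnext
  let x (j : ℕ) : D (n + j) := Nat.rec ⟨d, hd⟩ (fun j y => next (n + j) y) j
  have hx (j : ℕ) : (x j).1 - (x (j + 1)).1 ∈ I ^ (n + 1 + j) := by
    rw [Nat.add_right_comm]
    exact hnext (n + j) (x j)
  obtain ⟨c, hc⟩ := exists_forall_sub_mem_pow (x := fun j => (x j).1) (n + 1) hx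
  refine ⟨c, fun k => ?_, hc 0⟩
  have hxc : (x k).1 - c ∈ D (n + k) := by
    refine hpow _ _ ?_
    rw [Nat.add_right_comm]
    exact hc k
  rw [← sub_sub_cancel (x k).1 c]
  exact hD (Nat.le_add_left k n) (sub_mem (x k).2 hxc)

theorem exists_forall_mem_pow_of_mul_mem_pow [IsNoetherianRing A] (I : Ideal A) {t : A}
    (ht : t ∈ nonZeroDivisors A) : ∃ k, ∀ n x, t * x ∈ I ^ (n + k) → x ∈ I ^ n := by
  obtain ⟨k, hk⟩ := Ideal.exists_pow_inf_eq_pow_smul I (M := A) (Ideal.span {t})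
  refine ⟨k, fun n x hx => ?_⟩
  have hmem : t * x ∈ I ^ (n + k) • (⊤ : Submodule A A) ⊓ Ideal.span {t} :=
    ⟨by rwa [smul_eq_mul, Ideal.mul_top], Ideal.mul_mem_right _ _ (Ideal.mem_span_singleton_self t)⟩
  rw [hk (n + k) (Nat.le_add_left k n), Nat.add_sub_cancel] at hmem
  obtain ⟨z, hz, hzt⟩ :=
    Ideal.mem_mul_span_singleton.mp (Submodule.smul_mono le_rfl inf_le_right hmem)
  have hzx : z = x := by
    rwa [mul_comm, mul_cancel_left_mem_nonZeroDivisors ht] at hzt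
  rwa [← hzx]

/-- A subring which is closed in the `I`-adic topology. -/
def IsAdicallyClosed (I : Ideal A) (C : Subring A) : Prop :=
  ∀ a, (∀ n, ∃ c ∈ C, a - c ∈ I ^ n) → a ∈ C

variable [IsNoetherianRing A] [IsAdicComplete I A] {C : Subring A}

theorem IsAdicallyClosed.exists_eq_mul (hC : IsAdicallyClosed I C) {t c : A}
    (ht : t ∈ nonZeroDivisors A) (hc : ∀ n, ∃ u ∈ C, c - t * u ∈ I ^ n) : ∃ u ∈ C, c = t * u := by
  choose u hu hcu using hc
  obtain ⟨k, hk⟩ := exists_forall_mem_pow_of_mul_mem_pow I ht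
  obtain ⟨a, ha⟩ := exists_forall_sub_mem_pow (I := I) (x := fun n => u (n + k)) 0 fun n => by
    rw [zero_add]
    refine hk _ _ ?_
    rw [show t * (u (n + k) - u (n + 1 + k)) =
      (c - t * u (n + 1 + k)) - (c - t * u (n + k)) by ring]
    exact sub_mem (Ideal.pow_le_pow_right (by lia) (hcu _)) (hcu _)
  simp only [zero_add] at ha
  refine ⟨a, hC a fun n => ⟨_, hu (n + k), ?_⟩, ?_⟩
  · rw [← neg_sub]
    exact neg_mem (ha n)
  · refine sub_eq_zero.mp (eq_zero_of_forall_mem_pow (I := I) fun n => ?_)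
    rw [show c - t * a = (c - t * u (n + k)) + t * (u (n + k) - a) by ring]
    exact add_mem (Ideal.pow_le_pow_right (Nat.le_add_right n k) (hcu _))
      (Ideal.mul_mem_left _ t (ha n))

theorem IsAdicallyClosed.isAdicComplete_span_singleton (hC : IsAdicallyClosed I C) {π : C}
    (hπ : (π : A) ∈ I) (hπ0 : (π : A) ∈ nonZeroDivisors A) :
    IsAdicComplete (Ideal.span {π}) C := by
  have hdvd (n : ℕ) (c : C) : c ∈ Ideal.span {π} ^ n ↔ ∃ u : C, c = π ^ n * u := by
    rw [Ideal.span_singleton_pow, Ideal.mem_span_singleton]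
    rfl
  have hpow (n : ℕ) (c : C) (hc : c ∈ Ideal.span {π} ^ n) : (c : A) ∈ I ^ n := by
    obtain ⟨u, rfl⟩ := (hdvd n c).mp hc
    exact Ideal.mul_mem_right _ _ (Ideal.pow_mem_pow hπ n)
  refine { haus' := fun x hx => ?_, prec' := fun f hf => ?_ }
  · refine Subtype.ext (eq_zero_of_forall_mem_pow (I := I) fun n => hpow n x ?_)
    have := hx n
    rwa [SModEq.zero, smul_eq_mul, Ideal.mul_top] at this
  simp only [SModEq.sub_mem, smul_eq_mul, Ideal.mul_top] at hf ⊢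
  obtain ⟨a, ha⟩ := exists_forall_sub_mem_pow (I := I) (x := fun n => (f n : A)) 0 fun n => by
    rw [zero_add]
    exact hpow n _ (hf n.le_succ)
  simp only [zero_add] at ha
  have haC : a ∈ C := hC a fun n => ⟨f n, (f n).2, by rw [← neg_sub]; exact neg_mem (ha n)⟩
  refine ⟨⟨a, haC⟩, fun n => (hdvd n _).mpr ?_⟩
  obtain ⟨u, hu, hau⟩ := hC.exists_eq_mul (pow_mem hπ0 n) (c := f n - a) fun k => by
    obtain ⟨u, hu⟩ := (hdvd n _).mp (hf (le_max_left n k))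
    refine ⟨u, u.2, ?_⟩
    rw [← Subring.coe_pow, ← Subring.coe_mul, ← hu, AddSubgroupClass.coe_sub,
      sub_sub_sub_cancel_left]
    exact Ideal.pow_le_pow_right (le_max_right n k) (ha _)
  exact ⟨⟨u, hu⟩, Subtype.ext hau⟩

end AdicLimit

section CoefficientRing

variable {A : Type*} [CommRing A] [IsLocalRing A]

theorem isMaximal_comap_subtype {D : Subring A} (hD : ∀ a, ∃ d ∈ D, a - d ∈ maximalIdeal A) :
    ((maximalIdeal A).comap D.subtype).IsMaximal := by
  have hsurj : Function.Surjective ((residue A).comp D.subtype) :=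
    residue_surjective.forall.mpr fun a => by
      obtain ⟨d, hd, had⟩ := hD a
      refine ⟨⟨d, hd⟩, ?_⟩
      rw [RingHom.comp_apply, Subring.subtype_apply, eq_comm, ← sub_eq_zero, ← map_sub]
      exact (residue_eq_zero_iff _).mpr had
  have := RingHom.ker_isMaximal_of_surjective _ hsurj
  rwa [← RingHom.comap_ker, ker_residue] at this

/-- The subring `D` contains `𝔪 ^ n`, and `D / 𝔪 ^ n` is a coefficient ring of `A / 𝔪 ^ n`: it maps
onto the residue field with kernel generated by `p`. -/
structure IsCoefficientRingModPow (p n : ℕ) (D : Subring A) : Prop where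
  mem_of_mem_pow : ∀ x ∈ maximalIdeal A ^ n, x ∈ D
  exists_sub_mem : ∀ a, ∃ d ∈ D, a - d ∈ maximalIdeal A
  exists_sub_mul_mem_pow : ∀ d ∈ D, d ∈ maximalIdeal A → ∃ u ∈ D, d - p * u ∈ maximalIdeal A ^ n

namespace IsCoefficientRingModPow

variable {p n : ℕ} {D : Subring A}

theorem top (p : ℕ) : IsCoefficientRingModPow p 1 (⊤ : Subring A) where
  mem_of_mem_pow _ _ := trivial
  exists_sub_mem a := ⟨a, trivial, by rw [sub_self]; exact Ideal.zero_mem _⟩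
  exists_sub_mul_mem_pow d _ hd := ⟨0, trivial, by rwa [mul_zero, sub_zero, pow_one]⟩

theorem pow_mem_span_sup_comap (hD : IsCoefficientRingModPow p (n + 1) D) (hp : 2 ≤ p) {x : D}
    (hx : (x : A) ∈ maximalIdeal A) :
    x ^ p ∈ Ideal.span {(p : D)} ⊔ (maximalIdeal A ^ (n + 2)).comap D.subtype := by
  obtain ⟨u, hu, hxu⟩ := hD.exists_sub_mul_mem_pow x x.2 hx
  obtain ⟨w, hw⟩ := sub_dvd_pow_sub_pow x (x - p * ⟨u, hu⟩) p
  refine Ideal.mem_span_singleton_sup.mpr ⟨⟨u, hu⟩ * w, (x - p * ⟨u, hu⟩) ^ p, ?_, ?_⟩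
  · rw [Ideal.mem_comap, map_pow]
    have := Ideal.pow_mem_pow hxu p
    rw [← pow_mul] at this
    exact Ideal.pow_le_pow_right (by nlinarith) this
  · linear_combination -hw

theorem exists_succ [Fact p.Prime] (hD : IsCoefficientRingModPow p (n + 1) D)
    (hpm : (p : A) ∈ maximalIdeal A) :
    ∃ D' ≤ D, IsCoefficientRingModPow p (n + 2) D' ∧
      ∀ d ∈ D, ∃ d' ∈ D', d - d' ∈ maximalIdeal A ^ (n + 1) := by
  let J : Ideal D := Ideal.span {(p : D)} ⊔ (maximalIdeal A ^ (n + 2)).comap D.subtype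
  have hpJ : (p : D) ∈ J := Ideal.mem_sup_left (Ideal.mem_span_singleton_self _)
  have := isMaximal_comap_subtype hD.exists_sub_mem
  have hJP : J ≤ (maximalIdeal A).comap D.subtype :=
    sup_le ((Ideal.span_singleton_le_iff_mem _).mpr hpm)
      (Ideal.comap_mono (Ideal.pow_le_self (Nat.succ_ne_zero _)))
  obtain ⟨F, hJF, hFJ, hF⟩ := exists_coefficientField_mod_of_pow_mem p hJP hpJ
    fun x hx => hD.pow_mem_span_sup_comap (Nat.Prime.two_le Fact.out) hx
  have hlift : ∀ d ∈ D, ∃ d' ∈ F.map D.subtype, d - d' ∈ maximalIdeal A ^ (n + 1) := fun d hd => by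
    obtain ⟨f, hf, hdf⟩ := hF ⟨d, hd⟩
    obtain ⟨u, hu, hdfu⟩ := hD.exists_sub_mul_mem_pow _ (sub_mem hd f.2) hdf
    refine ⟨f + p * u, ⟨f + p * ⟨u, hu⟩, add_mem hf (hJF _ (J.mul_mem_right _ hpJ)), rfl⟩, ?_⟩
    rwa [← sub_sub]
  refine ⟨F.map D.subtype, ?_, ⟨fun x hx => ?_, fun a => ?_, ?_⟩, hlift⟩
  · rintro _ ⟨d, -, rfl⟩
    exact d.2
  · have hxD := hD.mem_of_mem_pow x (Ideal.pow_le_pow_right (Nat.le_succ _) hx)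
    exact ⟨⟨x, hxD⟩, hJF _ (Ideal.mem_sup_right hx), rfl⟩
  · obtain ⟨d, hd, had⟩ := hD.exists_sub_mem a
    obtain ⟨f, hf, hdf⟩ := hF ⟨d, hd⟩
    refine ⟨f, ⟨f, hf, rfl⟩, ?_⟩
    rw [← sub_add_sub_cancel]
    exact add_mem had hdf
  · rintro _ ⟨f, hf, rfl⟩ hfm
    obtain ⟨u, t, ht, huf⟩ := Ideal.mem_span_singleton_sup.mp (hFJ f hf hfm)
    obtain ⟨v, hv, huv⟩ := hlift u u.2
    refine ⟨v, hv, ?_⟩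
    have hfv : D.subtype f - p * v = p * (u - v) + t := by
      rw [← huf]
      simp only [map_add, map_mul, map_natCast, Subring.subtype_apply]
      ring
    rw [hfv, pow_succ']
    exact add_mem (Ideal.mul_mem_mul hpm huv) (pow_succ' (maximalIdeal A) (n + 1) ▸ ht)

end IsCoefficientRingModPow

theorem exists_isAdicallyClosed_surjective_residue (p : ℕ) [Fact p.Prime]
    [IsPrecomplete (maximalIdeal A) A] (hpm : (p : A) ∈ maximalIdeal A) :
    ∃ C : Subring A, IsAdicallyClosed (maximalIdeal A) C ∧
      (∀ a, ∃ c ∈ C, a - c ∈ maximalIdeal A) ∧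
      ∀ c ∈ C, c ∈ maximalIdeal A → ∀ n, ∃ u ∈ C, c - p * u ∈ maximalIdeal A ^ n := by
  have hstep (n : ℕ) (D : {D : Subring A // IsCoefficientRingModPow p (n + 1) D}) :
      ∃ D' : {D : Subring A // IsCoefficientRingModPow p (n + 2) D}, D'.1 ≤ D.1 ∧
        ∀ d ∈ D.1, ∃ d' ∈ D'.1, d - d' ∈ maximalIdeal A ^ (n + 1) := by
    obtain ⟨D', hle, hD', hlift⟩ := D.2.exists_succ hpm
    exact ⟨⟨D', hD'⟩, hle, hlift⟩
  choose next hnext hlift using hstep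
  let D (n : ℕ) : {D : Subring A // IsCoefficientRingModPow p (n + 1) D} :=
    Nat.rec ⟨⊤, .top p⟩ next n
  have hanti : Antitone fun n => (D n).1.toAddSubgroup :=
    antitone_nat_of_succ_le fun n => hnext n (D n)
  have happrox (n : ℕ) {d : A} (hd : d ∈ (D n).1) :
      ∃ c ∈ ⨅ k, (D k).1, d - c ∈ maximalIdeal A ^ (n + 1) := by
    obtain ⟨c, hc, hdc⟩ := exists_forall_mem_sub_mem_pow hanti (fun n => (D n).2.mem_of_mem_pow)
      (fun n => hlift n (D n)) hd
    exact ⟨c, Subring.mem_iInf.mpr hc, hdc⟩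
  refine ⟨⨅ k, (D k).1, fun a ha => Subring.mem_iInf.mpr fun n => ?_, fun a => ?_,
    fun c hc hcm n => ?_⟩
  · obtain ⟨c, hc, hac⟩ := ha (n + 1)
    rw [← sub_add_cancel a c]
    exact add_mem ((D n).2.mem_of_mem_pow _ hac) (Subring.mem_iInf.mp hc n)
  · simpa only [zero_add, pow_one] using happrox 0 (d := a) trivial
  · obtain ⟨u, hu, hcu⟩ := (D n).2.exists_sub_mul_mem_pow c (Subring.mem_iInf.mp hc n) hcm
    obtain ⟨v, hv, huv⟩ := happrox n hu
    refine ⟨v, hv, Ideal.pow_le_pow_right (Nat.le_succ n) ?_⟩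
    rw [show c - p * v = (c - p * u) + p * (u - v) by ring]
    exact add_mem hcu (Ideal.mul_mem_left _ _ huv)

theorem IsAdicallyClosed.isUnit_of_notMem_maximalIdeal {C : Subring A}
    (hC : IsAdicallyClosed (maximalIdeal A) C) (hsurj : ∀ a, ∃ c ∈ C, a - c ∈ maximalIdeal A)
    {c : C} (hc : (c : A) ∉ maximalIdeal A) : IsUnit c := by
  obtain ⟨b, hcb⟩ := (notMem_maximalIdeal.mp hc).exists_right_inv
  obtain ⟨d, hd, hbd⟩ := hsurj b
  have herr : 1 - c * d ∈ maximalIdeal A := by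
    rw [← hcb, ← mul_sub]
    exact Ideal.mul_mem_left _ _ hbd
  have hbC : b ∈ C := hC b fun n => by
    -- `d * ∑ i < n, (1 - c * d) ^ i` are the partial sums of the geometric series for `b`.
    refine ⟨d * ∑ i ∈ Finset.range n, (1 - c * d) ^ i,
      mul_mem hd (sum_mem fun i _ => pow_mem (sub_mem (one_mem _) (mul_mem c.2 hd)) i), ?_⟩
    have hgeom := mul_neg_geom_sum (1 - (c : A) * d) n
    rw [show b - d * ∑ i ∈ Finset.range n, (1 - (c : A) * d) ^ i = b * (1 - c * d) ^ n by
      linear_combination (d * ∑ i ∈ Finset.range n, (1 - (c : A) * d) ^ i) * hcb - b * hgeom]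
    exact Ideal.mul_mem_left _ _ (Ideal.pow_mem_pow herr n)
  exact IsUnit.of_mul_eq_one ⟨b, hbC⟩ (Subtype.ext hcb)

theorem charZero_of_natCast_prime_mem_maximalIdeal [IsDomain A] (p : ℕ) [Fact p.Prime]
    (hpm : (p : A) ∈ maximalIdeal A) (hp : (p : A) ≠ 0) : CharZero A := by
  have hchar (q : ℕ) [Fact q.Prime] (hq : (q : A) ∈ maximalIdeal A) : CharP (ResidueField A) q := by
    rw [CharP.charP_iff_prime_eq_zero Fact.out, ← map_natCast (residue A)]
    exact (residue_eq_zero_iff _).mpr hq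
  rcases CharP.exists' A with h | ⟨q, hq, hA⟩
  · exact h
  · have hq0 : (q : A) = 0 := CharP.cast_eq_zero A q
    have hpq : p = q := CharP.eq _ (hchar p hpm) (hchar q (hq0 ▸ Ideal.zero_mem _))
    exact absurd (hpq ▸ hq0) hp

theorem isDiscreteValuationRing_of_forall_isUnit_or_dvd {C : Type*} [CommRing C] [IsDomain C]
    {π : C} (hπ : ¬ IsUnit π) (hπ0 : π ≠ 0) [IsHausdorff (Ideal.span {π}) C]
    (hdvd : ∀ x, IsUnit x ∨ π ∣ x) : IsDiscreteValuationRing C := by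
  refine IsDiscreteValuationRing.ofHasUnitMulPowIrreducibleFactorization
    ⟨π, ⟨hπ, fun a b hab => ?_⟩, fun {x} hx => ?_⟩
  · by_contra! hunit
    obtain ⟨a', rfl⟩ := (hdvd a).resolve_left hunit.1
    obtain ⟨b', rfl⟩ := (hdvd b).resolve_left hunit.2
    exact hπ (.of_mul_eq_one (a' * b') (mul_left_cancel₀ hπ0 (by linear_combination -hab)))
  · have hfin : FiniteMultiplicity π x := by
      by_contra hinf
      refine hx (eq_zero_of_forall_mem_pow (I := Ideal.span {π}) fun n => ?_)
      rw [Ideal.span_singleton_pow, Ideal.mem_span_singleton]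
      exact FiniteMultiplicity.not_iff_forall.mp hinf n
    obtain ⟨y, hxy, hy⟩ := hfin.exists_eq_pow_mul_and_not_dvd
    refine ⟨multiplicity π x, ((hdvd y).resolve_right hy).unit, ?_⟩
    rw [IsUnit.unit_spec, ← hxy]

/-- The subring `C` of the local ring `A` maps onto the residue field of `A`, and is either a field
or a principal ideal domain of characteristic zero, complete with respect to the nonzero element
`π` of the maximal ideal of `A`. For fields `C` one takes `π = 0`, so that both cases can be treated
at once. -/
structure IsCoefficientRing (C : Subring A) (π : C) : Prop where
  exists_sub_mem : ∀ a : A, ∃ c : C, a - c ∈ maximalIdeal A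
  mem_maximalIdeal : (π : A) ∈ maximalIdeal A
  isPrincipalIdealRing : IsPrincipalIdealRing C
  isAdicComplete : IsAdicComplete (Ideal.span {π}) C
  isField_or_charZero : IsField C ∨ π ≠ 0 ∧ CharZero A

theorem IsCoefficientRing.of_isField {C : Subring A} (hC : IsField C)
    (hsurj : ∀ a, ∃ c ∈ C, a - c ∈ maximalIdeal A) : IsCoefficientRing C 0 where
  exists_sub_mem a := by
    obtain ⟨c, hc, hac⟩ := hsurj a
    exact ⟨⟨c, hc⟩, hac⟩
  mem_maximalIdeal := Ideal.zero_mem _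
  isPrincipalIdealRing := by
    let := hC.toField
    exact (inferInstance : IsPrincipalIdealRing C)
  isAdicComplete := by
    rw [Ideal.span_singleton_zero]
    infer_instance
  isField_or_charZero := .inl hC

theorem exists_isCoefficientRing_of_natCast_prime_mem [IsNoetherianRing A] [IsDomain A]
    [IsAdicComplete (maximalIdeal A) A] (p : ℕ) [Fact p.Prime] (hpm : (p : A) ∈ maximalIdeal A) :
    ∃ (C : Subring A) (π : C), IsCoefficientRing C π := by
  obtain ⟨C, hC, hsurj, happrox⟩ := exists_isAdicallyClosed_surjective_residue p hpm
  by_cases hp : (p : A) = 0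
  · refine ⟨C, 0, .of_isField ⟨⟨0, 1, zero_ne_one⟩, mul_comm, fun {x} hx => ?_⟩ hsurj⟩
    refine (hC.isUnit_of_notMem_maximalIdeal hsurj fun hxm => hx (Subtype.ext ?_)).exists_right_inv
    refine eq_zero_of_forall_mem_pow (I := maximalIdeal A) fun n => ?_
    obtain ⟨u, -, hxu⟩ := happrox x x.2 hxm n
    rwa [hp, zero_mul, sub_zero] at hxu
  · have hpreg : (p : A) ∈ nonZeroDivisors A := mem_nonZeroDivisors_of_ne_zero hp
    have hpC : (p : C) ≠ 0 := fun h => hp (by rw [← map_natCast C.subtype, h, map_zero])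
    have := hC.isAdicComplete_span_singleton (π := p) hpm hpreg
    have hdvd (x : C) : IsUnit x ∨ (p : C) ∣ x := by
      by_cases hx : (x : A) ∈ maximalIdeal A
      · obtain ⟨u, hu, hxu⟩ := hC.exists_eq_mul hpreg (happrox x x.2 hx)
        exact .inr ⟨⟨u, hu⟩, Subtype.ext hxu⟩
      · exact .inl (hC.isUnit_of_notMem_maximalIdeal hsurj hx)
    have hunit : ¬ IsUnit (p : C) := fun h => hpm (h.map C.subtype)
    have := isDiscreteValuationRing_of_forall_isUnit_or_dvd hunit hpC hdvd
    refine ⟨C, p, fun a => ?_, hpm, inferInstance, inferInstance, ?_⟩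
    · obtain ⟨c, hc, hac⟩ := hsurj a
      exact ⟨⟨c, hc⟩, hac⟩
    · exact .inr ⟨hpC, charZero_of_natCast_prime_mem_maximalIdeal p hpm hp⟩

theorem formallySmooth_rat (K : Type*) [Field K] [Algebra ℚ K] : Algebra.FormallySmooth ℚ K := by
  obtain ⟨s, hs⟩ := exists_isTranscendenceBasis ℚ K
  have := hs.isAlgebraic_field
  have := algebraRat.charZero K
  exact Algebra.FormallySmooth.of_algebraicIndependent_of_isSeparable hs.1

theorem nonempty_algebraRat_of_charZero_residueField [CharZero (ResidueField A)] :
    Nonempty (Algebra ℚ A) := by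
  refine (EqualCharZero.nonempty_algebraRat_iff A).mpr fun I hI => ?_
  have : CharZero (A ⧸ maximalIdeal A) := ‹CharZero (ResidueField A)›
  exact (Ideal.Quotient.factor (le_maximalIdeal hI)).charZero

theorem exists_isCoefficientRing_of_charZero_residueField [IsAdicComplete (maximalIdeal A) A]
    [CharZero (ResidueField A)] : ∃ (C : Subring A) (π : C), IsCoefficientRing C π := by
  obtain ⟨_⟩ := nonempty_algebraRat_of_charZero_residueField (A := A)
  let : Field (A ⧸ maximalIdeal A) := Ideal.Quotient.field _
  have : Algebra.FormallySmooth ℚ (A ⧸ maximalIdeal A) := formallySmooth_rat _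
  obtain ⟨g, hg⟩ := Algebra.FormallySmooth.exists_mkₐ_comp_eq_of_isAdicComplete (R := ℚ)
    (AlgHom.id ℚ (A ⧸ maximalIdeal A))
  refine ⟨g.toRingHom.range, 0, .of_isField ?_ fun a => ⟨_, ⟨Ideal.Quotient.mk _ a, rfl⟩, ?_⟩⟩
  · exact (RingEquiv.ofBijective g.toRingHom.rangeRestrict
      ⟨RingHom.injective _, RingHom.rangeRestrict_surjective _⟩).symm.toMulEquiv.isField
        (Field.toIsField _)
  · exact Ideal.Quotient.eq.mp congr($hg (Ideal.Quotient.mk _ a)).symm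

theorem exists_isCoefficientRing (A : Type*) [CommRing A] [IsLocalRing A] [IsNoetherianRing A]
    [IsDomain A] [IsAdicComplete (maximalIdeal A) A] :
    ∃ (C : Subring A) (π : C), IsCoefficientRing C π := by
  rcases CharP.exists' (ResidueField A) with h | ⟨p, hp, h⟩
  · exact exists_isCoefficientRing_of_charZero_residueField
  · refine exists_isCoefficientRing_of_natCast_prime_mem p ((residue_eq_zero_iff _).mp ?_)
    rw [map_natCast, CharP.cast_eq_zero]

end CoefficientRing

section FiniteOverPowerSeries

open MvPowerSeries in
theorem exists_mvPowerSeries_algHom {σ : Type*} [Finite σ] (C : Type*) {A : Type*} [CommRing C]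
    [CommRing A] [Algebra C A] {I : Ideal A} [IsAdicComplete I A] {x : σ → A} (hx : ∀ i, x i ∈ I) :
    ∃ φ : MvPowerSeries σ C →ₐ[C] A, ∀ i, φ (X i) = x i := by
  let ev : MvPolynomial σ C →ₐ[C] A := MvPolynomial.aeval x
  have hev (n : ℕ) : MvPolynomial.idealOfVars σ C ^ n ≤ (I ^ n).comap ev := by
    have hle : MvPolynomial.idealOfVars σ C ≤ I.comap ev := by
      rw [MvPolynomial.idealOfVars, Ideal.span_le]
      rintro _ ⟨i, rfl⟩
      simpa [ev] using hx i
    exact (Ideal.pow_right_mono hle n).trans (Ideal.le_comap_pow _ n)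
  let f (n : ℕ) : MvPowerSeries σ C →ₐ[C] A ⧸ I ^ n :=
    (Ideal.quotientMapₐ (I ^ n) ev (hev n)).comp ((truncTotalAlgHom σ C n).restrictScalars C)
  have hf (n : ℕ) (q : MvPowerSeries σ C) :
      f n q = Ideal.Quotient.mk (I ^ n) (ev (truncTotal n q)) := rfl
  refine ⟨IsAdicComplete.liftAlgHom I f fun {m n} hmn => AlgHom.ext fun q => ?_, fun i => ?_⟩
  · change Ideal.Quotient.mk (I ^ m) (ev (truncTotal n q)) = f m q
    rw [hf, Ideal.Quotient.eq, ← map_sub]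
    exact hev m (truncTotal_sub_truncTotal_mem_pow_idealOfVars hmn le_rfl q)
  · refine sub_eq_zero.mp (eq_zero_of_forall_mem_pow (I := I) fun n => ?_)
    have hX : x i = ev (MvPolynomial.X i) := (MvPolynomial.aeval_X x i).symm
    rw [← Ideal.Quotient.eq_zero_iff_mem, map_sub, IsAdicComplete.mk_liftAlgHom, hf, hX, ← map_sub,
      ← map_sub, Ideal.Quotient.eq_zero_iff_mem]
    refine hev n ((MvPolynomial.mem_pow_idealOfVars_iff' ..).mpr fun y hy => ?_)
    rw [MvPolynomial.coeff_sub, coeff_truncTotal _ hy, ← MvPolynomial.coe_X,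
      MvPolynomial.coeff_coe, sub_self]

theorem finite_of_finite_quotient_map {R S : Type*} [CommRing R] [CommRing S] [Algebra R S]
    (I : Ideal R) [IsPrecomplete I R] [IsHausdorff I S]
    [Module.Finite R (S ⧸ I.map (algebraMap R S))] : Module.Finite R S := by
  have : Module.Finite R (S ⧸ (I • ⊤ : Submodule R S)) := by
    rw [Ideal.smul_top_eq_map]
    exact .equiv (Submodule.Quotient.restrictScalarsEquiv R (I.map (algebraMap R S))).symm
  exact finite_of_finite_quotient_smul_top I S

section ResidueField

variable (C : Type*) {A : Type*} [CommRing C] [CommRing A] [IsLocalRing A] [Algebra C A]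

theorem finite_of_maximalIdeal_smul_eq_zero
    (hsurj : ∀ a : A, ∃ c : C, a - algebraMap C A c ∈ maximalIdeal A)
    (M : Type*) [AddCommGroup M] [Module A M] [Module C M] [IsScalarTower C A M]
    [Module.Finite A M] (hM : ∀ a ∈ maximalIdeal A, ∀ x : M, a • x = 0) : Module.Finite C M := by
  obtain ⟨s, hs⟩ := ‹Module.Finite A M›
  refine ⟨s, eq_top_iff.mpr fun x _ => ?_⟩
  have hx : x ∈ Submodule.span A (s : Set M) := hs ▸ Submodule.mem_top
  induction hx using Submodule.span_induction with
  | mem x hx => exact Submodule.subset_span hx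
  | zero => exact Submodule.zero_mem _
  | add x y _ _ hx hy => exact Submodule.add_mem _ (hx trivial) (hy trivial)
  | smul a x _ hx =>
    obtain ⟨c, hc⟩ := hsurj a
    have hac : a • x = c • x := by
      rw [← algebraMap_smul A c x, ← sub_eq_zero, ← sub_smul, hM _ hc]
    rw [hac]
    exact Submodule.smul_mem _ c (hx trivial)

theorem finite_of_maximalIdeal_pow_smul_eq_zero [IsNoetherianRing A]
    (hsurj : ∀ a : A, ∃ c : C, a - algebraMap C A c ∈ maximalIdeal A) (k : ℕ)
    (M : Type*) [AddCommGroup M] [Module A M] [Module C M] [IsScalarTower C A M]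
    [Module.Finite A M] (hM : ∀ a ∈ maximalIdeal A ^ k, ∀ x : M, a • x = 0) :
    Module.Finite C M := by
  induction k generalizing M with
  | zero =>
    have : Subsingleton M := subsingleton_of_forall_eq 0 fun x => by
      simpa using hM 1 (by simp) x
    infer_instance
  | succ k ih =>
    let N : Submodule A M := maximalIdeal A ^ k • ⊤
    have hquot : Module.Finite C (M ⧸ N) := ih (M ⧸ N) fun a ha x => by
      obtain ⟨x, rfl⟩ := N.mkQ_surjective x
      rw [← map_smul, Submodule.mkQ_apply, Submodule.Quotient.mk_eq_zero]
      exact Submodule.smul_mem_smul ha trivial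
    have hsub : Module.Finite C N := finite_of_maximalIdeal_smul_eq_zero C hsurj N
      fun a ha ⟨x, hx⟩ => Subtype.ext <| by
        change a • x = 0
        refine Submodule.smul_induction_on hx (fun b hb y _ => ?_) fun y z hy hz => ?_
        · rw [smul_smul]
          exact hM _ (pow_succ' (maximalIdeal A) k ▸ Ideal.mul_mem_mul ha hb) y
        · rw [smul_add, hy, hz, add_zero]
    have : Module.Finite C (N.restrictScalars C) := hsub
    have : Module.Finite C (M ⧸ N.restrictScalars C) :=
      .equiv (Submodule.Quotient.restrictScalarsEquiv C N).symm
    exact Module.Finite.of_submodule_quotient (N.restrictScalars C)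

end ResidueField

theorem IsCoefficientRing.finite_quotient {A : Type*} [CommRing A] [IsLocalRing A]
    [IsNoetherianRing A] {C : Subring A} {π : C} (hC : IsCoefficientRing C π) {J : Ideal A} {k : ℕ}
    (hk : maximalIdeal A ^ k ≤ Ideal.span {(π : A)} ⊔ J) : Module.Finite C (A ⧸ J) := by
  have := hC.isAdicComplete
  have : IsHausdorff (Ideal.span {π}) (A ⧸ J) := by
    refine IsHausdorff.of_map (S := A) (J := maximalIdeal A) ?_
    rw [Ideal.map_span, Set.image_singleton, Ideal.span_singleton_le_iff_mem]
    exact hC.mem_maximalIdeal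
  have : Module.Finite C ((A ⧸ J) ⧸ (Ideal.span {π}).map (algebraMap C (A ⧸ J))) := by
    refine finite_of_maximalIdeal_pow_smul_eq_zero (A := A) C hC.exists_sub_mem k _ fun a ha x => ?_
    obtain ⟨b, j, hj, hbj⟩ := Ideal.mem_span_singleton_sup.mp (hk ha)
    obtain ⟨y, rfl⟩ := Ideal.Quotient.mk_surjective x
    have hπ : algebraMap C (A ⧸ J) π ∈ (Ideal.span {π}).map (algebraMap C (A ⧸ J)) :=
      Ideal.mem_map_of_mem _ (Ideal.mem_span_singleton_self π)
    have hay : a • y = y * Ideal.Quotient.mk J b * algebraMap C (A ⧸ J) π := by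
      rw [Algebra.smul_def, ← hbj, map_add, Ideal.Quotient.algebraMap_eq,
        Ideal.Quotient.eq_zero_iff_mem.mpr hj, add_zero, map_mul, mul_comm, mul_assoc]
      rfl
    change Ideal.Quotient.mk _ (a • y) = 0
    rw [Ideal.Quotient.eq_zero_iff_mem, hay]
    exact Ideal.mul_mem_left _ _ hπ
  exact finite_of_finite_quotient_map (Ideal.span {π})

theorem IsCoefficientRing.finite_mvPowerSeries {A : Type*} [CommRing A] [IsLocalRing A]
    [IsNoetherianRing A] {C : Subring A} {π : C} (hC : IsCoefficientRing C π) {σ : Type*} [Finite σ]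
    {x : σ → A} (hx : ∀ i, x i ∈ maximalIdeal A) {k : ℕ}
    (hk : maximalIdeal A ^ k ≤ Ideal.span {(π : A)} ⊔ Ideal.span (Set.range x))
    [Algebra (MvPowerSeries σ C) A] [IsScalarTower C (MvPowerSeries σ C) A]
    (hX : ∀ i, algebraMap (MvPowerSeries σ C) A (MvPowerSeries.X i) = x i) :
    Module.Finite (MvPowerSeries σ C) A := by
  let I : Ideal (MvPowerSeries σ C) := Ideal.span (Set.range MvPowerSeries.X)
  have hI : I.map (algebraMap _ A) = Ideal.span (Set.range x) := by
    rw [Ideal.map_span, ← Set.range_comp]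
    exact congrArg (fun y => Ideal.span (Set.range y)) (funext hX)
  have hIm : I.map (algebraMap _ A) ≤ maximalIdeal A := by
    rw [hI, Ideal.span_le]
    exact Set.range_subset_iff.mpr hx
  have : IsHausdorff I A := IsHausdorff.of_map (S := A) hIm
  have : Module.Finite C (A ⧸ I.map (algebraMap _ A)) := hC.finite_quotient (hI ▸ hk)
  have : Module.Finite (MvPowerSeries σ C) (A ⧸ I.map (algebraMap _ A)) :=
    .of_restrictScalars_finite C _ _
  exact finite_of_finite_quotient_map I

end FiniteOverPowerSeries

section Dimension

theorem ringKrullDim_le_of_isIntegral (R S : Type*) [CommRing R] [CommRing S] [Algebra R S]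
    [Algebra.IsIntegral R S] : ringKrullDim S ≤ ringKrullDim R :=
  Order.krullDim_le_of_strictMono (PrimeSpectrum.comap (algebraMap R S))
    fun _ _ hPQ => Ideal.IsIntegral.comap_lt_comap (R := R) hPQ

theorem injective_algebraMap_of_ringKrullDim_le {B A : Type*} [CommRing B] [IsDomain B] [CommRing A]
    [Algebra B A] [Algebra.IsIntegral B A] [FiniteRingKrullDim A]
    (h : ringKrullDim B ≤ ringKrullDim A) : Function.Injective (algebraMap B A) := by
  let S := (Algebra.ofId B A).range
  have : Algebra.IsIntegral S A := Algebra.IsIntegral.tower_top B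
  refine (injective_iff_map_eq_zero _).mpr fun b hb => by_contra fun hb0 => ?_
  have hS : ringKrullDim S + 1 ≤ ringKrullDim B :=
    ringKrullDim_succ_le_of_surjective (Algebra.ofId B A).rangeRestrict.toRingHom
      (Algebra.ofId B A).rangeRestrict_surjective (mem_nonZeroDivisors_of_ne_zero hb0)
      (Subtype.ext hb)
  have hA : ringKrullDim A + 1 ≤ ringKrullDim A :=
    (add_le_add_left (ringKrullDim_le_of_isIntegral S A) 1).trans (hS.trans h)
  rw [ringKrullDim, Order.krullDim_eq_length_of_finiteDimensionalOrder,
    ENat.WithBot.add_one_le_natCast_iff] at hA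
  exact hA.false

theorem ringKrullDim_powerSeries (R : Type*) [CommRing R] [IsNoetherianRing R] :
    ringKrullDim (PowerSeries R) = ringKrullDim R + 1 := by
  have hker : Ideal.span {PowerSeries.X} = RingHom.ker (PowerSeries.constantCoeff (R := R)) := by
    ext φ
    rw [RingHom.mem_ker, Ideal.mem_span_singleton, PowerSeries.X_dvd_iff]
  have hquot : ringKrullDim (PowerSeries R ⧸ Ideal.span {(PowerSeries.X : PowerSeries R)}) =
      ringKrullDim R :=
    ringKrullDim_eq_of_ringEquiv <| (Ideal.quotEquivOfEq hker).trans <|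
      RingHom.quotientKerEquivOfSurjective PowerSeries.constantCoeff_surj
  have hX : PowerSeries.X ∈ Ring.jacobson (PowerSeries R) := by
    rw [← Ideal.jacobson_bot]
    exact IsAdicComplete.le_jacobson_bot (Ideal.span {PowerSeries.X})
      (Ideal.mem_span_singleton_self _)
  rw [← hquot, ringKrullDim_quotient_span_singleton_succ_eq_ringKrullDim_of_mem_jacobson ?_ hX]
  exact fun f g hfg => PowerSeries.X_mul_cancel hfg

theorem ringKrullDim_mvPowerSeries_fin (R : Type*) [CommRing R] [IsNoetherianRing R] (n : ℕ) :
    ringKrullDim (MvPowerSeries (Fin n) R) = ringKrullDim R + n := by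
  induction n with
  | zero =>
    rw [ringKrullDim_eq_of_ringEquiv (MvPowerSeries.isEmptyEquiv (Fin 0) R).toRingEquiv,
      Nat.cast_zero, add_zero]
  | succ n ih =>
    rw [ringKrullDim_eq_of_ringEquiv (MvPowerSeries.finSuccEquiv R n).toRingEquiv,
      ringKrullDim_powerSeries, ih, Nat.cast_succ, add_assoc]

theorem exists_systemOfParameters (A : Type*) [CommRing A] [IsLocalRing A] [IsNoetherianRing A] :
    ∃ (r : ℕ) (x : Fin r → A) (k : ℕ), ringKrullDim A = r ∧ (∀ i, x i ∈ maximalIdeal A) ∧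
      maximalIdeal A ^ k ≤ Ideal.span (Set.range x) := by
  obtain ⟨s, hs, hcard⟩ := Ideal.exists_finset_card_eq_height_of_isNoetherianRing (maximalIdeal A)
  have hrange : Set.range (fun i => (s.equivFin.symm i : A)) = s := by
    rw [← Function.comp_def, s.equivFin.symm.surjective.range_comp, Subtype.range_coe]
  have hrad : maximalIdeal A ≤ (Ideal.span (s : Set A)).radical := by
    rw [Ideal.radical_eq_sInf]
    exact le_sInf fun P hP => hs.2 ⟨hP.2, hP.1⟩ (le_maximalIdeal hP.2.ne_top)
  obtain ⟨k, hk⟩ := Ideal.exists_radical_pow_le_of_fg (Ideal.span (s : Set A))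
    (IsNoetherian.noetherian _)
  refine ⟨s.card, fun i => s.equivFin.symm i, k, ?_, fun i => ?_, ?_⟩
  · rw [← maximalIdeal_height_eq_ringKrullDim, ← hcard]
    rfl
  · exact hs.1.2 (Ideal.subset_span (s.equivFin.symm i).2)
  · rw [hrange]
    exact (Ideal.pow_right_mono hrad k).trans hk

theorem exists_systemOfParameters_quotient {A : Type*} [CommRing A] [IsLocalRing A]
    [IsNoetherianRing A] {I : Ideal A} (hI : I ≠ ⊤) :
    ∃ (r : ℕ) (x : Fin r → A) (k : ℕ), ringKrullDim (A ⧸ I) = r ∧ (∀ i, x i ∈ maximalIdeal A) ∧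
      maximalIdeal A ^ k ≤ I ⊔ Ideal.span (Set.range x) := by
  have : Nontrivial (A ⧸ I) := Ideal.Quotient.nontrivial_iff.mpr hI
  have hmk := Ideal.Quotient.mk_surjective (I := I)
  have : IsLocalRing (A ⧸ I) := .of_surjective' _ hmk
  have := IsLocalHom.of_surjective (Ideal.Quotient.mk I) hmk
  obtain ⟨r, y, k, hr, hy, hk⟩ := exists_systemOfParameters (A ⧸ I)
  choose x hx using fun i => hmk (y i)
  refine ⟨r, x, k, hr, fun i => ?_, ?_⟩
  · rw [← IsLocalRing.maximalIdeal_comap (Ideal.Quotient.mk I), Ideal.mem_comap, hx]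
    exact hy i
  · have hxy : (Ideal.span (Set.range x)).map (Ideal.Quotient.mk I) = Ideal.span (Set.range y) := by
      rw [Ideal.map_span, ← Set.range_comp]
      exact congrArg (fun z => Ideal.span (Set.range z)) (funext hx)
    have hcomap := Ideal.comap_map_of_surjective' _ hmk (Ideal.span (Set.range x))
    rw [Ideal.mk_ker, sup_comm] at hcomap
    rw [← hcomap, ← Ideal.map_le_iff_le_comap, Ideal.map_pow,
      map_maximalIdeal_of_surjective _ hmk, hxy]
    exact hk

end Dimension

section CompleteDomain

universe u

theorem IsCoefficientRing.ringKrullDim_quotient_add_le {A : Type*} [CommRing A] [IsLocalRing A]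
    [IsNoetherianRing A] [IsDomain A] {C : Subring A} {π : C} (hC : IsCoefficientRing C π) :
    ringKrullDim C + ringKrullDim (A ⧸ Ideal.span {(π : A)}) ≤ ringKrullDim A := by
  rcases hC.isField_or_charZero with hfield | ⟨hπ, -⟩
  · rw [ringKrullDim_eq_zero_of_isField hfield, zero_add]
    exact ringKrullDim_quotient_le _
  · have := hC.isPrincipalIdealRing
    have hdim : ringKrullDim C ≤ 1 := Order.KrullDimLE.krullDim_le
    have hπA : (π : A) ∈ nonZeroDivisors A :=
      mem_nonZeroDivisors_of_ne_zero fun h => hπ (Subtype.ext h)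
    rw [← ringKrullDim_quotient_span_singleton_succ_eq_ringKrullDim_of_mem_nonZeroDivisors hπA
      hC.mem_maximalIdeal, add_comm]
    gcongr

theorem isN2_mvPowerSeries_of_charZero (C : Type*) [CommRing C] [IsDomain C] [CharZero C]
    [IsNoetherianRing C] [IsIntegrallyClosed C] (r : ℕ) : IsN2 (MvPowerSeries (Fin r) C) := by
  have : CharZero (MvPowerSeries (Fin r) C) :=
    charZero_of_injective_ringHom MvPowerSeries.C_injective
  exact isN2_of_charZero _

theorem isN2_mvPowerSeries_of_field (k : Type*) [Field k] (r : ℕ) :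
    IsN2 (MvPowerSeries (Fin r) k) := by
  rcases CharP.exists' k with h | ⟨p, hp, h⟩
  · exact isN2_mvPowerSeries_of_charZero k r
  · exact (isPurelyInseparablyN2_mvPowerSeries p k r).isN2

theorem IsCoefficientRing.isN2_mvPowerSeries {A : Type*} [CommRing A] [IsLocalRing A] [IsDomain A]
    {C : Subring A} {π : C} (hC : IsCoefficientRing C π) (r : ℕ) :
    IsN2 (MvPowerSeries (Fin r) C) := by
  rcases hC.isField_or_charZero with hfield | ⟨-, hchar⟩
  · exact @isN2_mvPowerSeries_of_field C hfield.toField r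
  · have := hC.isPrincipalIdealRing
    have : CharZero C := (RingHom.charZero_iff (ϕ := C.subtype) Subtype.val_injective).mpr hchar
    exact isN2_mvPowerSeries_of_charZero C r

theorem finite_integralClosure_of_isIntegral (R S L : Type*) [CommRing R] [CommRing S] [CommRing L]
    [Algebra R S] [Algebra S L] [Algebra R L] [IsScalarTower R S L] [Algebra.IsIntegral R S]
    [Module.Finite R (integralClosure R L)] : Module.Finite S (integralClosure S L) := by
  let f : integralClosure R L →ₗ[R] integralClosure S L :=
    { toFun := fun z => ⟨z, z.2.tower_top⟩
      map_add' := fun _ _ => rfl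
      map_smul' := fun _ _ => rfl }
  have : Module.Finite R (integralClosure S L) :=
    .of_surjective f fun z => ⟨⟨z, isIntegral_trans (R := R) (z : L) z.2⟩, rfl⟩
  exact .of_restrictScalars_finite R S _

theorem IsN2.finite_integralClosure_fractionRing {R : Type u} [CommRing R] [IsDomain R]
    (hR : IsN2 R) (A : Type u) [CommRing A] [IsDomain A] [Algebra R A] [FaithfulSMul R A]
    [Module.Finite R A] : Module.Finite A (integralClosure A (FractionRing A)) := by
  let _ : Algebra (FractionRing R) (FractionRing A) := FractionRing.liftAlgebra R (FractionRing A)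
  have : Module.Finite R (integralClosure R (FractionRing A)) :=
    hR (FractionRing R) (FractionRing A)
  exact finite_integralClosure_of_isIntegral R A (FractionRing A)

theorem finite_integralClosure_of_isAdicComplete (A : Type*) [CommRing A] [IsLocalRing A]
    [IsNoetherianRing A] [IsDomain A] [IsAdicComplete (maximalIdeal A) A] :
    Module.Finite A (integralClosure A (FractionRing A)) := by
  obtain ⟨C, π, hC⟩ := exists_isCoefficientRing A
  have := hC.isPrincipalIdealRing
  have hπ : Ideal.span {(π : A)} ≠ ⊤ := fun h =>
    (mem_maximalIdeal _).mp hC.mem_maximalIdeal (Ideal.span_singleton_eq_top.mp h)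
  obtain ⟨r, x, k, hr, hx, hk⟩ := exists_systemOfParameters_quotient hπ
  obtain ⟨φ, hφ⟩ := exists_mvPowerSeries_algHom C hx
  algebraize [φ.toRingHom]
  have : IsScalarTower C (MvPowerSeries (Fin r) C) A :=
    .of_algebraMap_eq fun c => (φ.commutes c).symm
  have : Module.Finite (MvPowerSeries (Fin r) C) A := hC.finite_mvPowerSeries hx hk hφ
  have hdim : ringKrullDim (MvPowerSeries (Fin r) C) ≤ ringKrullDim A := by
    rw [ringKrullDim_mvPowerSeries_fin, ← hr]
    exact hC.ringKrullDim_quotient_add_le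
  have : FaithfulSMul (MvPowerSeries (Fin r) C) A :=
    (faithfulSMul_iff_algebraMap_injective ..).mpr (injective_algebraMap_of_ringKrullDim_le hdim)
  exact (hC.isN2_mvPowerSeries r).finite_integralClosure_fractionRing A

end CompleteDomain

section Completion

theorem isNoetherianRing_adicCompletion {R : Type*} [CommRing R] [IsNoetherianRing R]
    (I : Ideal R) : IsNoetherianRing (AdicCompletion I R) := by
  have hfg : I.FG := I.fg_of_isNoetherianRing
  obtain ⟨r, x, hx⟩ := Submodule.fg_iff_exists_fin_generating_family.mp hfg
  let J : Ideal (MvPowerSeries (Fin r) R) := Ideal.span (Set.range MvPowerSeries.X)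
  have := AdicCompletion.isAdicComplete_self I hfg
  have hxI (i : Fin r) :
      algebraMap R (AdicCompletion I R) (x i) ∈ I.map (algebraMap R (AdicCompletion I R)) :=
    Ideal.mem_map_of_mem _ (hx ▸ Submodule.subset_span (Set.mem_range_self i))
  obtain ⟨φ, hφ⟩ := exists_mvPowerSeries_algHom R hxI
  have hJ : J.map φ.toRingHom = I.map (algebraMap R (AdicCompletion I R)) := by
    refine .trans ?_ (congrArg (Ideal.map (algebraMap R (AdicCompletion I R))) hx)
    rw [Ideal.map_span, ← Ideal.span, Ideal.map_span, ← Set.range_comp, ← Set.range_comp]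
    exact congrArg (fun y => Ideal.span (Set.range y)) (funext hφ)
  have : IsHausdorff (J.map φ.toRingHom) (AdicCompletion I R) := hJ ▸ inferInstance
  have hsurj : Function.Surjective φ.toRingHom := by
    refine surjective_of_mk_map_comp_surjective (I := J) _ fun y => ?_
    obtain ⟨a, rfl⟩ := Ideal.Quotient.mk_surjective y
    obtain ⟨c, hc⟩ := Ideal.Quotient.mk_surjective (AdicCompletion.evalOneₐ I a)
    refine ⟨MvPowerSeries.C c, ?_⟩
    rw [RingHom.comp_apply, Ideal.Quotient.eq, hJ, ← AdicCompletion.ker_evalOneₐ_eq_map I hfg,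
      RingHom.mem_ker, map_sub, sub_eq_zero]
    exact (congrArg (AdicCompletion.evalOneₐ I) (φ.commutes c)).trans
      (((AdicCompletion.evalOneₐ I).commutes c).trans hc)
  exact isNoetherianRing_of_surjective _ _ _ hsurj

theorem isPrecomplete_quotient {R M : Type*} [CommRing R] [AddCommGroup M] [Module R M]
    (I : Ideal R) [IsPrecomplete I M] (N : Submodule R M) : IsPrecomplete I (M ⧸ N) := by
  refine AdicCompletion.of_surjective_iff.mp fun y => ?_
  obtain ⟨z, rfl⟩ := AdicCompletion.map_surjective I N.mkQ_surjective y
  obtain ⟨x, rfl⟩ := AdicCompletion.of_surjective I M z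
  exact ⟨N.mkQ x, (AdicCompletion.map_of I N.mkQ x).symm⟩

theorem isAdicComplete_maximalIdeal_quotient {A : Type*} [CommRing A] [IsLocalRing A]
    [IsNoetherianRing A] [IsAdicComplete (maximalIdeal A) A] (P : Ideal A) [IsLocalRing (A ⧸ P)] :
    IsAdicComplete (maximalIdeal (A ⧸ P)) (A ⧸ P) := by
  rw [← map_maximalIdeal_of_surjective (algebraMap A (A ⧸ P)) Ideal.Quotient.mk_surjective,
    IsAdicComplete.map_algebraMap_iff]
  have := isPrecomplete_quotient (maximalIdeal A) P
  constructor

end Completion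

section UniversalDenominator

/-- `e` is a universal denominator of `B` in the `B`-algebra `L`: multiplication by `e` carries
every element of `L` integral over `B` into the image of `B`. -/
def IsUniversalDenominator {B : Type*} (L : Type*) [CommRing B] [CommRing L] [Algebra B L] (e : B) :
    Prop :=
  ∀ y : L, IsIntegral B y → IsLocalization.IsInteger B (e • y)

theorem exists_isUniversalDenominator_of_finite {B : Type*} (L : Type*) [CommRing B] [CommRing L]
    [Algebra B L] (S : Submonoid B) [IsLocalization S L] [Module.Finite B (integralClosure B L)] :
    ∃ e ∈ S, IsUniversalDenominator L e := by
  obtain ⟨s, hs⟩ := Module.Finite.fg_top (R := B) (M := integralClosure B L)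
  obtain ⟨e, he⟩ := IsLocalization.exist_integer_multiples S s (fun z => (z : L))
  refine ⟨e, e.2, fun y hy => ?_⟩
  have hspan : (⟨y, hy⟩ : integralClosure B L) ∈ Submodule.span B (s : Set _) :=
    hs ▸ Submodule.mem_top
  suffices ∀ z ∈ Submodule.span B (s : Set (integralClosure B L)),
      IsLocalization.IsInteger B ((e : B) • (z : L)) from this _ hspan
  intro z hz
  induction hz using Submodule.span_induction with
  | mem z hz => exact he z hz
  | zero => simpa using IsLocalization.isInteger_zero
  | add u v _ _ hu hv => simpa using IsLocalization.isInteger_add hu hv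
  | smul a u _ hu =>
    rw [Subalgebra.coe_smul, smul_comm]
    exact IsLocalization.isInteger_smul hu

theorem exists_mul_sub_mul_mem_of_isUniversalDenominator {B L : Type*} [CommRing B] [CommRing L]
    [Algebra B L] {S : Submonoid B} [IsLocalization S L] {P : Ideal B} [P.IsPrime]
    (hSP : ∀ s ∈ S, s ∉ P) {e : B}
    (he : IsUniversalDenominator (FractionRing (B ⧸ P)) (Ideal.Quotient.mk P e)) {y : L}
    (hy : IsIntegral B y) {a : B} {s : S} (has : y * algebraMap B L s = algebraMap B L a) :
    ∃ c, e * a - c * s ∈ P := by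
  let K := FractionRing (B ⧸ P)
  let g : L →ₐ[B] K := IsLocalization.liftAlgHom (M := S) (f := Algebra.ofId B K) fun s => by
    rw [Algebra.ofId_apply, isUnit_iff_ne_zero, IsScalarTower.algebraMap_apply B (B ⧸ P) K, Ne,
      IsFractionRing.to_map_eq_zero_iff, Ideal.Quotient.algebraMap_eq,
      Ideal.Quotient.eq_zero_iff_mem]
    exact hSP s s.2
  have hg : g y * algebraMap B K s = algebraMap B K a := by
    rw [← g.commutes, ← g.commutes, ← map_mul, has]
  obtain ⟨c, hc⟩ := he (g y) (hy.map g).tower_top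
  obtain ⟨c, rfl⟩ := Ideal.Quotient.mk_surjective c
  refine ⟨c, Ideal.Quotient.eq_zero_iff_mem.mp (IsFractionRing.injective (B ⧸ P) K ?_)⟩
  rw [Algebra.smul_def] at hc
  have hB (b : B) : algebraMap (B ⧸ P) K (Ideal.Quotient.mk P b) = algebraMap B K b := rfl
  rw [map_zero, hB, map_sub, map_mul, map_mul, ← hg, ← hB c, hc, hB, sub_eq_zero, mul_assoc]

theorem eq_zero_of_forall_mem_minimalPrimes {B : Type*} [CommRing B] [IsReduced B] {z : B}
    (hz : ∀ P ∈ minimalPrimes B, z ∈ P) : z = 0 := by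
  have hrad : z ∈ nilradical B := by
    rw [nilradical, ← Ideal.sInf_minimalPrimes]
    exact Submodule.mem_sInf.mpr hz
  exact (mem_nilradical.mp hrad).eq_zero

theorem mem_nonZeroDivisors_of_forall_notMem_minimalPrimes {B : Type*} [CommRing B] [IsReduced B]
    {e : B} (he : ∀ P ∈ minimalPrimes B, e ∉ P) : e ∈ nonZeroDivisors B := by
  refine mem_nonZeroDivisors_iff_right.mpr fun z hz =>
    eq_zero_of_forall_mem_minimalPrimes fun P hP => ?_
  exact (hP.1.1.mem_or_mem (hz ▸ P.zero_mem : z * e ∈ P)).resolve_right (he P hP)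

theorem exists_notMem_forall_mem_minimalPrimes {B : Type*} [CommRing B] [IsNoetherianRing B]
    {P : Ideal B} (hP : P ∈ minimalPrimes B) :
    ∃ f ∉ P, ∀ Q ∈ minimalPrimes B, Q ≠ P → f ∈ Q := by
  classical
  have hfin := minimalPrimes.finite_of_isNoetherianRing B
  have hnle : ¬(hfin.toFinset.erase P).inf id ≤ P := by
    rw [hP.1.1.inf_le']
    rintro ⟨Q, hQ, hQP⟩
    rw [Finset.mem_erase, hfin.mem_toFinset] at hQ
    exact hQ.1 (hQP.antisymm (hP.2 hQ.2.1 hQP))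
  obtain ⟨f, hf, hfP⟩ := SetLike.not_le_iff_exists.mp hnle
  refine ⟨f, hfP, fun Q hQ hQP => Submodule.mem_finsetInf.mp hf Q ?_⟩
  exact Finset.mem_erase.mpr ⟨hQP, hfin.mem_toFinset.mpr hQ⟩

theorem exists_isUniversalDenominator_of_minimalPrimes {B : Type*} (L : Type*) [CommRing B]
    [IsNoetherianRing B] [IsReduced B] [CommRing L] [Algebra B L] {S : Submonoid B}
    [IsLocalization S L] (hS : S ≤ nonZeroDivisors B)
    (hquot : ∀ P ∈ minimalPrimes B,
      ∃ e ∉ P, IsUniversalDenominator (FractionRing (B ⧸ P)) (Ideal.Quotient.mk P e)) :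
    ∃ e ∈ nonZeroDivisors B, IsUniversalDenominator L e := by
  have := (minimalPrimes.finite_of_isNoetherianRing B).fintype
  choose e heP he using fun P : minimalPrimes B => hquot P P.2
  choose f hfP hf using fun P : minimalPrimes B => exists_notMem_forall_mem_minimalPrimes P.2
  have hsum (g : minimalPrimes B → B) (P : minimalPrimes B) :
      Ideal.Quotient.mk P.1 (∑ Q, f Q * g Q) = Ideal.Quotient.mk P.1 (f P * g P) := by
    rw [map_sum, Finset.sum_eq_single_of_mem P (Finset.mem_univ P) fun Q _ hQP => ?_]
    exact Ideal.Quotient.eq_zero_iff_mem.mpr <|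
      Ideal.mul_mem_right _ _ (hf Q P P.2 fun h => hQP (Subtype.ext h.symm))
  refine ⟨∑ P, f P * e P, ?_, fun y hy => ?_⟩
  · refine mem_nonZeroDivisors_of_forall_notMem_minimalPrimes fun P hP hmem => ?_
    rw [← Ideal.Quotient.eq_zero_iff_mem, hsum e ⟨P, hP⟩, Ideal.Quotient.eq_zero_iff_mem] at hmem
    exact (hP.1.1.mem_or_mem hmem).elim (hfP ⟨P, hP⟩) (heP ⟨P, hP⟩)
  · obtain ⟨⟨a, s⟩, has⟩ := IsLocalization.surj S y
    choose c hc using fun P : minimalPrimes B =>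
      have := P.2.1.1
      exists_mul_sub_mul_mem_of_isUniversalDenominator (P := P.1) (fun s hs hsP =>
        notMem_nonZeroDivisors_of_mem_mem_minimalPrimes hsP P.2 (hS hs)) (he P) hy has
    have hac : (∑ P, f P * e P) * a = (∑ P, f P * c P) * s := by
      refine sub_eq_zero.mp (eq_zero_of_forall_mem_minimalPrimes fun P hP => ?_)
      rw [← Ideal.Quotient.eq_zero_iff_mem, map_sub, map_mul, map_mul, hsum e ⟨P, hP⟩,
        hsum c ⟨P, hP⟩, ← map_mul, ← map_mul, ← map_sub, Ideal.Quotient.eq_zero_iff_mem, mul_assoc,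
        mul_assoc, ← mul_sub]
      exact Ideal.mul_mem_left P _ (hc ⟨P, hP⟩)
    refine ⟨∑ P, f P * c P, (IsLocalization.map_units L s).mul_left_injective ?_⟩
    beta_reduce
    rw [Algebra.smul_def, mul_assoc, has, ← map_mul, ← map_mul, hac]

theorem exists_isUniversalDenominator_of_isAdicComplete {B : Type*} (L : Type*) [CommRing B]
    [IsLocalRing B] [IsNoetherianRing B] [IsReduced B] [IsAdicComplete (maximalIdeal B) B]
    [CommRing L] [Algebra B L] {S : Submonoid B} [IsLocalization S L] (hS : S ≤ nonZeroDivisors B) :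
    ∃ e ∈ nonZeroDivisors B, IsUniversalDenominator L e := by
  refine exists_isUniversalDenominator_of_minimalPrimes L hS fun P hP => ?_
  have := hP.1.1
  have : IsLocalRing (B ⧸ P) := .of_surjective' _ Ideal.Quotient.mk_surjective
  have := isAdicComplete_maximalIdeal_quotient P
  have := finite_integralClosure_of_isAdicComplete (B ⧸ P)
  obtain ⟨e, he, hden⟩ := exists_isUniversalDenominator_of_finite (FractionRing (B ⧸ P))
    (nonZeroDivisors (B ⧸ P))
  obtain ⟨e, rfl⟩ := Ideal.Quotient.mk_surjective e
  exact ⟨e, fun h => nonZeroDivisors.ne_zero he (Ideal.Quotient.eq_zero_iff_mem.mpr h), hden⟩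

end UniversalDenominator

section Descent

open TensorProduct

theorem algebraMapSubmonoid_nonZeroDivisors_le (R B : Type*) [CommRing R] [CommRing B] [Algebra R B]
    [Module.Flat R B] :
    Algebra.algebraMapSubmonoid B (nonZeroDivisors R) ≤ nonZeroDivisors B := by
  rintro _ ⟨s, hs, rfl⟩
  refine mem_nonZeroDivisors_iff_right.mpr fun z hz => ?_
  refine Module.Flat.isSMulRegular_of_nonZeroDivisors (M := B) hs ?_
  beta_reduce
  rw [smul_zero, Algebra.smul_def, mul_comm, hz]

theorem isIntegral_lTensor_subtype {R : Type*} (B : Type*) {K : Type*} [CommRing R] [CommRing B]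
    [CommRing K] [Algebra R B] [Algebra R K] (z : B ⊗[R] (integralClosure R K).toSubmodule) :
    IsIntegral B
      (AlgebraTensorModule.lTensor B B (integralClosure R K).toSubmodule.subtype z) := by
  induction z with
  | zero => rw [map_zero]; exact isIntegral_zero
  | add u v hu hv => rw [map_add]; exact hu.add hv
  | tmul b x =>
    have hx : IsIntegral R (Algebra.TensorProduct.includeRight (R := R) (A := B) (x : K)) :=
      x.2.map Algebra.TensorProduct.includeRight
    simpa [smul_tmul'] using (hx.tower_top (A := B)).smul b

theorem finite_integralClosure_of_faithfullyFlat {R : Type*} (B K : Type*) [CommRing R] [CommRing B]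
    [CommRing K] [Algebra R B] [Algebra R K] [Module.FaithfullyFlat R B] [IsNoetherianRing B]
    [Module.Flat B (B ⊗[R] K)] {e : B} (he : e ∈ nonZeroDivisors B)
    (hden : IsUniversalDenominator (B ⊗[R] K) e) : Module.Finite R (integralClosure R K) := by
  let N := (integralClosure R K).toSubmodule
  let ι : B ⊗[R] N →ₗ[B] B ⊗[R] K := AlgebraTensorModule.lTensor B B N.subtype
  have hι : Function.Injective ι :=
    Module.Flat.lTensor_preserves_injective_linearMap N.subtype N.subtype_injective
  let κ : B ⊗[R] N →ₗ[B] LinearMap.range (Algebra.linearMap B (B ⊗[R] K)) :=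
    LinearMap.codRestrict _ (e • ι) fun z => hden _ (isIntegral_lTensor_subtype B z)
  have hκ : Function.Injective κ := fun u v huv =>
    hι (Module.Flat.isSMulRegular_of_nonZeroDivisors he (congrArg Subtype.val huv))
  have : Module.Finite B (B ⊗[R] N) := .of_injective κ hκ
  exact .of_finite_tensorProduct_of_faithfullyFlat (R := R) (M := N) B

theorem finite_integralClosure_fractionRing_of_isReduced_adicCompletion (R : Type*) [CommRing R]
    [IsLocalRing R] [IsNoetherianRing R] [IsReduced (AdicCompletion (maximalIdeal R) R)] :
    Module.Finite R (integralClosure R (FractionRing R)) := by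
  let B := AdicCompletion (maximalIdeal R) R
  have : IsNoetherianRing B := isNoetherianRing_adicCompletion _
  have : Module.FaithfullyFlat R B := .of_flat_of_isLocalHom
  obtain ⟨e, he, hden⟩ := exists_isUniversalDenominator_of_isAdicComplete
    (B ⊗[R] FractionRing R) (algebraMapSubmonoid_nonZeroDivisors_le R B)
  exact finite_integralClosure_of_faithfullyFlat B (FractionRing R) he hden

theorem isReduced_of_isReduced_adicCompletion (R : Type*) [CommRing R] [IsLocalRing R]
    [IsNoetherianRing R] [IsReduced (AdicCompletion (maximalIdeal R) R)] : IsReduced R :=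
  have : Module.FaithfullyFlat R (AdicCompletion (maximalIdeal R) R) := .of_flat_of_isLocalHom
  isReduced_of_injective (algebraMap R (AdicCompletion (maximalIdeal R) R))
    (FaithfulSMul.algebraMap_injective _ _)

end Descent

section TensorPower

open TensorProduct Function

theorem exists_linearMap_quotient_maximalIdeal_apply_ne_zero {R M : Type*} [CommRing R]
    [IsLocalRing R] [AddCommGroup M] [Module R M] {N : Submodule R M} {y : M}
    (hy : y ∉ N ⊔ maximalIdeal R • (⊤ : Submodule R M)) :
    ∃ f : M →ₗ[R] R ⧸ maximalIdeal R, (∀ x ∈ N, f x = 0) ∧ f y ≠ 0 := by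
  let _ : Field (R ⧸ maximalIdeal R) := Ideal.Quotient.field _
  let q := (maximalIdeal R • (⊤ : Submodule R M)).mkQ
  let N' : Submodule (R ⧸ maximalIdeal R) (M ⧸ maximalIdeal R • (⊤ : Submodule R M)) :=
    Submodule.span _ (N.map q)
  have hy' : q y ∉ N' := by
    have hN' : N'.restrictScalars R = N.map q := by
      rw [Submodule.restrictScalars_span R _ Ideal.Quotient.mk_surjective, Submodule.span_eq]
    rwa [← Submodule.restrictScalars_mem R, hN', ← Submodule.mem_comap, Submodule.comap_map_mkQ,
      sup_comm]
  obtain ⟨f, hfy, hfN⟩ := Submodule.exists_le_ker_of_notMem hy'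
  exact ⟨f.restrictScalars R ∘ₗ q,
    fun x hx => hfN (Submodule.subset_span (Submodule.mem_map_of_mem hx)), hfy⟩

theorem exists_notMem_span_singleton_sup_maximalIdeal_smul_top {R M : Type*} [CommRing R]
    [IsLocalRing R] [AddCommGroup M] [Module R M] [Module.Finite R M] {x : M}
    (hx : Submodule.span R {x} ≠ ⊤) :
    ∃ y, y ∉ Submodule.span R {x} ⊔ maximalIdeal R • (⊤ : Submodule R M) := by
  by_contra! hall
  exact hx <| top_le_iff.mp <| Submodule.le_of_le_smul_of_le_jacobson_bot Module.Finite.fg_top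
    (maximalIdeal_le_jacobson _) fun z _ => hall z

/- In `I ⊗ I` one has `t • (x ⊗ y) = (t * x) ⊗ y = x • (t ⊗ y) = t ⊗ (x * y)`, which is symmetric
in `x` and `y`. -/
theorem smul_tprod_update_update_swap {R ι : Type*} [CommRing R] [DecidableEq ι] {I : Ideal R}
    {i j : ι} (hij : i ≠ j) (t x y : I) (v : ι → I) :
    (t : R) • PiTensorProduct.tprod R (update (update v i x) j y) =
      (t : R) • PiTensorProduct.tprod R (update (update v i y) j x) := by
  have smul_swap (a b : I) : (a : R) • b = (b : R) • a := Subtype.ext (mul_comm _ _)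
  have symmetric_form (x y : I) :
      (t : R) • PiTensorProduct.tprod R (update (update v i x) j y) =
        PiTensorProduct.tprod R (update (update v i t) j ((x : R) • y)) := by
    rw [MultilinearMap.map_update_smul, update_comm hij, ← MultilinearMap.map_update_smul,
      smul_swap t x, MultilinearMap.map_update_smul, update_comm hij.symm]
  rw [symmetric_form, symmetric_form, smul_swap x y]

theorem tprod_update_update_swap_of_torsion_eq_bot {R ι : Type*} [CommRing R] [DecidableEq ι]
    {I : Ideal R} (htf : Submodule.torsion R (⨂[R] _ : ι, I) = ⊥) {t : R} (htI : t ∈ I)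
    (ht : t ∈ nonZeroDivisors R) {i j : ι} (hij : i ≠ j) (x y : I) (v : ι → I) :
    PiTensorProduct.tprod R (update (update v i x) j y) =
      PiTensorProduct.tprod R (update (update v i y) j x) := by
  rw [← sub_eq_zero, ← Submodule.mem_bot R, ← htf, Submodule.mem_torsion_iff]
  refine ⟨⟨t, ht⟩, ?_⟩
  rw [Submonoid.mk_smul, smul_sub, sub_eq_zero]
  exact smul_tprod_update_update_swap hij ⟨t, htI⟩ x y v

theorem tprod_update_ne_tprod_update {k R M ι : Type*} [CommRing R] [CommRing k] [IsDomain k]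
    [Algebra R k] [AddCommGroup M] [Module R M] [Finite ι] [DecidableEq ι] {a b : M →ₗ[R] k}
    {x y : M} (hax : a x ≠ 0) (hbx : b x = 0) (hby : b y ≠ 0) (j : ι) (v : ι → M) :
    PiTensorProduct.tprod R (update (fun _ => x) j y) ≠
      PiTensorProduct.tprod R (update v j x) := by
  have := Fintype.ofFinite ι
  let F : (⨂[R] _ : ι, M) →ₗ[R] k := PiTensorProduct.lift <|
    (MultilinearMap.mkPiAlgebra R ι k).compLinearMap (update (fun _ => a) j b)
  have hF (w : ι → M) : F (PiTensorProduct.tprod R w) = ∏ l, update (fun _ => a) j b l (w l) := by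
    simp only [F, PiTensorProduct.lift.tprod, MultilinearMap.compLinearMap_apply,
      MultilinearMap.mkPiAlgebra_apply]
  have hleft : F (PiTensorProduct.tprod R (update (fun _ => x) j y)) ≠ 0 := by
    rw [hF]
    refine Finset.prod_ne_zero_iff.mpr fun l _ => ?_
    obtain rfl | hl := eq_or_ne l j
    · simpa using hby
    · simpa [hl] using hax
  have hright : F (PiTensorProduct.tprod R (update v j x)) = 0 := by
    rw [hF]
    exact Finset.prod_eq_zero (Finset.mem_univ j) (by simpa using hbx)
  exact fun heq => hleft (heq ▸ hright)

theorem exists_span_singleton_eq_top_of_torsion_eq_bot {R ι : Type*} [CommRing R] [IsLocalRing R]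
    [Finite ι] [Nontrivial ι] {I : Ideal R} [Module.Finite R I] {t : R} (htI : t ∈ I)
    (ht : t ∈ nonZeroDivisors R) (htf : Submodule.torsion R (⨂[R] _ : ι, I) = ⊥) :
    ∃ x : I, Submodule.span R {x} = ⊤ := by
  classical
  by_contra! hspan
  obtain ⟨x, hx⟩ := exists_notMem_span_singleton_sup_maximalIdeal_smul_top (hspan 0)
  obtain ⟨y, hy⟩ := exists_notMem_span_singleton_sup_maximalIdeal_smul_top (hspan x)
  obtain ⟨a, -, hax⟩ := exists_linearMap_quotient_maximalIdeal_apply_ne_zero hx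
  obtain ⟨b, hbx, hby⟩ := exists_linearMap_quotient_maximalIdeal_apply_ne_zero hy
  obtain ⟨i, j, hij⟩ := exists_pair_ne ι
  have hswap := tprod_update_update_swap_of_torsion_eq_bot htf htI ht hij x y fun _ => x
  rw [update_eq_self i fun _ => x] at hswap
  exact tprod_update_ne_tprod_update hax (hbx x (Submodule.mem_span_singleton_self x)) hby j _ hswap

end TensorPower

section Conductor

theorem mem_nonZeroDivisors_of_span_singleton_eq_top {R : Type*} [CommRing R] {I : Ideal R} {x : I}
    (hx : Submodule.span R {x} = ⊤) {t : R} (htI : t ∈ I) (ht : t ∈ nonZeroDivisors R) :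
    (x : R) ∈ nonZeroDivisors R := by
  obtain ⟨s, hs⟩ := (Submodule.span_singleton_eq_top_iff R x).mp hx ⟨t, htI⟩
  obtain rfl : s * x = t := congrArg Subtype.val hs
  exact (mul_mem_nonZeroDivisors.mp ht).2

theorem free_of_span_singleton_eq_top {R : Type*} [CommRing R] {I : Ideal R} {x : I}
    (hx : Submodule.span R {x} = ⊤) (hxn : (x : R) ∈ nonZeroDivisors R) : Module.Free R I := by
  refine .of_equiv (LinearEquiv.ofBijective (LinearMap.toSpanSingleton R I x) ⟨fun u v huv => ?_,
    (Submodule.span_singleton_eq_top_iff R x).mp hx⟩)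
  exact (mul_cancel_right_mem_nonZeroDivisors hxn).mp (congrArg Subtype.val huv)

theorem mem_conductorIdeal_iff {R : Type} [CommRing R] {r : R} :
    r ∈ conductorIdeal R ↔ IsUniversalDenominator (FractionRing R) r := by
  have mem_range_iff (z : IntClosure R) :
      r • z ∈ LinearMap.range (Algebra.linearMap R (IntClosure R)) ↔
        IsLocalization.IsInteger R (r • (z : FractionRing R)) :=
    exists_congr fun s => Subtype.ext_iff
  rw [conductorIdeal, Module.mem_annihilator]
  refine ⟨fun h y hy => ?_, fun h w => ?_⟩
  · rw [← mem_range_iff ⟨y, hy⟩, ← Submodule.Quotient.mk_eq_zero, Submodule.Quotient.mk_smul]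
    exact h _
  · obtain ⟨z, rfl⟩ := Submodule.Quotient.mk_surjective _ w
    rw [← Submodule.Quotient.mk_smul, Submodule.Quotient.mk_eq_zero, mem_range_iff]
    exact h z z.2

/- The universal denominators form an ideal of the integral closure: if `x` is one and `z` is
integral, then so is the element `r` of `R` with image `x • z`. -/
theorem integralClosure_eq_bot_of_isUniversalDenominator {R L : Type*} [CommRing R] [CommRing L]
    [Algebra R L] {x : R} (hx : IsUniversalDenominator L x) (hxL : IsUnit (algebraMap R L x))
    (hdvd : ∀ r, IsUniversalDenominator L r → x ∣ r) : integralClosure R L = ⊥ := by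
  refine eq_bot_iff.mpr fun z hz => ?_
  obtain ⟨r, hr⟩ := hx z hz
  have hrden : IsUniversalDenominator L r := fun w hw => by
    rw [Algebra.smul_def, hr, smul_mul_assoc]
    exact hx (z * w) (hz.mul hw)
  obtain ⟨s, rfl⟩ := hdvd r hrden
  refine Algebra.mem_bot.mpr ⟨s, hxL.mul_right_injective ?_⟩
  beta_reduce
  rw [← map_mul, hr, Algebra.smul_def]

end Conductor

theorem stmt8_general (R : Type) [CommRing R] [IsLocalRing R] [IsNoetherianRing R]
    (hau : AnalyticallyUnramified R)
    (htf : ∃ i : ℕ, 1 < i ∧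
      Submodule.torsion R (TensorPower R i ↥(conductorIdeal R)) = ⊥) :
    Module.Free R ↥(conductorIdeal R) ∧ IsNormalRing R := by
  have : IsReduced (AdicCompletion (maximalIdeal R) R) := hau
  have := finite_integralClosure_fractionRing_of_isReduced_adicCompletion R
  obtain ⟨i, hi, htf⟩ := htf
  have : Nontrivial (Fin i) := Fin.nontrivial_iff_two_le.mpr hi
  obtain ⟨t, ht, htden⟩ :=
    exists_isUniversalDenominator_of_finite (FractionRing R) (nonZeroDivisors R)
  have htc : t ∈ conductorIdeal R := mem_conductorIdeal_iff.mpr htden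
  obtain ⟨x, hx⟩ := exists_span_singleton_eq_top_of_torsion_eq_bot htc ht htf
  have hxn := mem_nonZeroDivisors_of_span_singleton_eq_top hx htc ht
  refine ⟨free_of_span_singleton_eq_top hx hxn, isReduced_of_isReduced_adicCompletion R, ?_⟩
  refine integralClosure_eq_bot_of_isUniversalDenominator (mem_conductorIdeal_iff.mp x.2)
    (IsLocalization.map_units (FractionRing R) ⟨x.1, hxn⟩) fun r hr => ?_
  obtain ⟨s, hs⟩ :=
    (Submodule.span_singleton_eq_top_iff R x).mp hx ⟨r, mem_conductorIdeal_iff.mpr hr⟩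
  exact ⟨s, (congrArg Subtype.val hs).symm.trans (mul_comm s x)⟩

-- STATEMENT 8
theorem stmt8 (R : Type) [CommRing R] [IsLocalRing R] [IsNoetherianRing R]
    (hau : AnalyticallyUnramified R) (hS2 : SerreS2 R)
    (htf : ∃ i : ℕ, 1 < i ∧
      Submodule.torsion R (TensorPower R i ↥(conductorIdeal R)) = ⊥) :
    Module.Free R ↥(conductorIdeal R) ∧ IsNormalRing R :=
  stmt8_general R hau htf
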